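/- Fix k ≥ 1 and let K = ℚ(α₁, …, α_k) be the field of rational functions in k algebraically independent indeterminates over ℚ. Let A_k ⊆ K be the set consisting of 0 together with all finite products ∏ᵢ (βᵢ − γᵢ)^{nᵢ} with βᵢ, γᵢ ∈ {0, 1, α₁, …, α_k}, βᵢ ≠ γᵢ, and nᵢ ∈ ℤ (so A_k ∖ {0} is a subgroup of K^× containing −1). Let Aut(U_k) denote the group, under composition, of all bijections σ : A_k → A_k such that σ(0) = 0, σ(xy) = σ(x)σ(y) for all x, y ∈ A_k, and for all a, b, c ∈ A_k one has a + b + c = 0 in K if and only if σ(a) + σ(b) + σ(c) = 0 in K. Then Aut(U₁) is isomorphic to the symmetric group S₃, and for every k ≥ 2, Aut(U_k) is isomorphic to the symmetric group S_{k+3}. -/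

import Mathlib

/-!
The symmetry of `U_k` becomes visible after adding a point at infinity. Let `V` consist of the
`k + 3` points `α₁, …, α_k, 0, 1, ∞`, and let `L = ℚ(x_v : v ∈ V)`. Sending `α_i` to the
cross-ratio of `(α_i, 0, ∞, 1)` embeds `ℚ(α₁, …, α_k)` into `L` (`emb`), and the nonzero elements
of `A_k` are carried exactly onto the group `Bm V` generated by the cross-ratios
`cr i j a b = (x_i - x_j)(x_a - x_b) / ((x_i - x_a)(x_j - x_b))` (`emb_mem`, `exists_of_mem`).
The symmetric group of `V` permutes the `x_v`, hence acts on `Bm V`, and so gives automorphisms of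
`U_k` (`exists_induced`, `Induced.isUkAut`).

The converse, that all automorphisms arise in this way (`exists_perm`), rests on the
determination of the fundamental elements: if `y` and `1 - y` both lie in `Bm V`, then `y` is a
cross-ratio (`eq_cr_of_one_sub_mem`). For this, write a relation `f + g = h` between products of
differences, and let `A`, `B`, `C` be the exponents of `f`, `g`, `h` on unordered pairs of
points. Specialize the `x_v` to distinct integers, some of which are congruent modulo powers of a
prime `P`. The `P`-adic valuation of a specialized product is the sum of its exponents weighted by
the valuations of the differences of these integers (`IsWeight`). So the minimum of the three
weighted sums is attained at least twice (`TwoMin`). Applying this to a single pair, to two disjoint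
pairs and to triangles, together with the fact that all exponent vectors have degree zero at each point, a
combinatorial argument (`Tri.classify`) shows that up to sign
`f = h * cr i j a b ^ m` and `g = h * cr i b a j ^ m`; a numerical specialization gives `m = 1`.

An automorphism therefore maps `α_v`, `α_v / α_w` and `(1 - α_v) / (1 - α_w)` to cross-ratios.
If `f`, `g`, `f / g` and `(1 - f) / (1 - g)` are cross-ratios, then up to the Klein
symmetry of their arguments the quadruples of `f` and `g` differ in exactly one entry (`pair_cr`:
the exponent vectors have norm `4` and scalar product `2`). Hence the images of the `α_v` have the
form `cr (z v) j a b` with common `j`, `a`, `b` (`glue`), and the automorphism is induced by the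
permutation `α_v ↦ z v`, `0 ↦ j`, `∞ ↦ a`, `1 ↦ b`.

For `k ≥ 2` there are at least five points and the symmetric group of `V` acts faithfully on
cross-ratios (`eq_one_of_five`). For `k = 1` the kernel is the Klein group, and the stabilizer of
`∞` is a complement, isomorphic to `S₃` (`aut_iso_one`).
-/

/-- The field `K = ℚ(α₁, …, α_k)` of rational functions in `k` algebraically independent
indeterminates over `ℚ`. -/
abbrev RatFuncField (k : ℕ) := FractionRing (MvPolynomial (Fin k) ℚ)

/-- The set `{0, 1, α₁, …, α_k} ⊆ K`. -/
def baseSet (k : ℕ) : Set (RatFuncField k) :=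
  insert 0 (insert 1
    (Set.range fun i : Fin k =>
      algebraMap (MvPolynomial (Fin k) ℚ) (RatFuncField k) (MvPolynomial.X i)))

/-- The set `A_k ⊆ K` consisting of `0` together with all finite products
`∏ᵢ (βᵢ - γᵢ) ^ nᵢ` with `βᵢ, γᵢ ∈ {0, 1, α₁, …, α_k}`, `βᵢ ≠ γᵢ` and `nᵢ ∈ ℤ`.  This is
the underlying set of Semple's `k`-regular partial field `U_k`. -/
def Ak (k : ℕ) : Set (RatFuncField k) :=
  {x | x = 0 ∨ ∃ (s : ℕ) (β γ : Fin s → RatFuncField k) (n : Fin s → ℤ),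
    (∀ i, β i ∈ baseSet k ∧ γ i ∈ baseSet k ∧ β i ≠ γ i) ∧
    x = ∏ i, (β i - γ i) ^ (n i)}

/-- A bijection `σ : A_k → A_k` is an automorphism of the partial field `U_k` if it fixes
`0`, is multiplicative, and preserves (in both directions) the vanishing of three-term
sums `a + b + c = 0`. -/
def IsUkAut (k : ℕ) (σ : Equiv.Perm (Ak k)) : Prop :=
  (∀ x : Ak k, (x : RatFuncField k) = 0 → ((σ x : RatFuncField k) = 0)) ∧
  (∀ x y z : Ak k, (x : RatFuncField k) * (y : RatFuncField k) = (z : RatFuncField k) →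
    (σ x : RatFuncField k) * (σ y : RatFuncField k) = (σ z : RatFuncField k)) ∧
  (∀ a b c : Ak k,
    ((a : RatFuncField k) + (b : RatFuncField k) + (c : RatFuncField k) = 0 ↔
      (σ a : RatFuncField k) + (σ b : RatFuncField k) + (σ c : RatFuncField k) = 0))

namespace KReg

open MvPolynomial

set_option linter.unusedSectionVars false
set_option linter.unusedFintypeInType false
set_option linter.unusedDecidableInType false

/-! ### Specialization of rational functions -/

section Spec

variable {R F : Type*} [CommRing R] [IsDomain R] [Field F]

/-- `Spec ev y q`: the fraction `y` can be written with a denominator not killed by `ev`, and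
its value under `ev` is then `q`. This is evaluation of rational functions at a point, as a
relation. -/
def Spec (ev : R →+* F) (y : FractionRing R) (q : F) : Prop :=
  ∃ f g : R, ev g ≠ 0 ∧ y * algebraMap R (FractionRing R) g = algebraMap R (FractionRing R) f ∧
    q * ev g = ev f

variable {ev : R →+* F} {x y : FractionRing R} {p q : F}

lemma Spec.of (f : R) : Spec ev (algebraMap R (FractionRing R) f) (ev f) :=
  ⟨f, 1, by simp, by simp, by simp⟩

lemma Spec.one : Spec ev (1 : FractionRing R) 1 := by
  simpa using Spec.of (ev := ev) 1

lemma Spec.zero : Spec ev (0 : FractionRing R) 0 := by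
  simpa using Spec.of (ev := ev) 0

lemma Spec.add (hx : Spec ev x p) (hy : Spec ev y q) : Spec ev (x + y) (p + q) := by
  obtain ⟨f, g, h0, h1, h2⟩ := hx
  obtain ⟨f', g', h0', h1', h2'⟩ := hy
  refine ⟨f * g' + f' * g, g * g', by simp [h0, h0'], ?_, ?_⟩
  · simp only [map_mul, map_add, ← h1, ← h1']; ring
  · simp only [map_mul, map_add, ← h2, ← h2']; ring

lemma Spec.neg (hx : Spec ev x p) : Spec ev (-x) (-p) := by
  obtain ⟨f, g, h0, h1, h2⟩ := hx
  exact ⟨-f, g, h0, by simp [h1], by simp [h2]⟩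

lemma Spec.sub (hx : Spec ev x p) (hy : Spec ev y q) : Spec ev (x - y) (p - q) := by
  simpa [sub_eq_add_neg] using hx.add hy.neg

lemma Spec.mul (hx : Spec ev x p) (hy : Spec ev y q) : Spec ev (x * y) (p * q) := by
  obtain ⟨f, g, h0, h1, h2⟩ := hx
  obtain ⟨f', g', h0', h1', h2'⟩ := hy
  refine ⟨f * f', g * g', by simp [h0, h0'], ?_, ?_⟩
  · simp only [map_mul, ← h1, ← h1']; ring
  · simp only [map_mul, ← h2, ← h2']; ring

lemma Spec.unique (hx : Spec ev x p) (hy : Spec ev x q) : p = q := by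
  obtain ⟨f, g, h0, h1, h2⟩ := hx
  obtain ⟨f', g', h0', h1', h2'⟩ := hy
  have : f * g' = f' * g := by
    apply IsFractionRing.injective R (FractionRing R)
    simp only [map_mul, ← h1, ← h1']; ring
  have h3 := congrArg ev this
  simp only [map_mul, ← h2, ← h2'] at h3
  have h4 : ev g * ev g' ≠ 0 := mul_ne_zero h0 h0'
  apply mul_right_cancel₀ h4
  linear_combination h3

lemma Spec.inv (hx : Spec ev x p) (hp : p ≠ 0) : Spec ev x⁻¹ p⁻¹ := by
  have hx0 : x ≠ 0 := by
    rintro rfl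
    exact hp (hx.unique Spec.zero)
  obtain ⟨f, g, h0, h1, h2⟩ := hx
  refine ⟨g, f, ?_, ?_, ?_⟩
  · rw [← h2]; exact mul_ne_zero hp h0
  · rw [← h1]; field_simp
  · rw [← h2]; field_simp

lemma Spec.div (hx : Spec ev x p) (hy : Spec ev y q) (hq : q ≠ 0) :
    Spec ev (x / y) (p / q) := by
  simpa [div_eq_mul_inv] using hx.mul (hy.inv hq)

lemma Spec.pow (hx : Spec ev x p) (n : ℕ) : Spec ev (x ^ n) (p ^ n) := by
  induction n with
  | zero => simpa using Spec.one
  | succ n ih => simpa [pow_succ] using ih.mul hx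

lemma Spec.zpow (hx : Spec ev x p) (hp : p ≠ 0) (n : ℤ) : Spec ev (x ^ n) (p ^ n) := by
  obtain ⟨n, rfl | rfl⟩ := n.eq_nat_or_neg
  · simpa using hx.pow n
  · simpa using (hx.pow n).inv (pow_ne_zero n hp)

lemma Spec.prod {ι : Type*} (s : Finset ι) {f : ι → FractionRing R} {g : ι → F}
    (h : ∀ i ∈ s, Spec ev (f i) (g i)) : Spec ev (∏ i ∈ s, f i) (∏ i ∈ s, g i) := by
  classical
  induction s using Finset.induction_on with
  | empty => simpa using Spec.one
  | insert a s ha ih =>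
    rw [Finset.prod_insert ha, Finset.prod_insert ha]
    exact (h a (by simp)).mul (ih fun i hi => h i (by simp [hi]))

end Spec

/-! ### Products of differences of indeterminates -/

section Points

variable {V : Type*} [Fintype V] [DecidableEq V]

/-- The field `ℚ(x_v : v ∈ V)`. -/
abbrev LL (V : Type*) := FractionRing (MvPolynomial V ℚ)

/-- The indeterminate `x_v`. -/
noncomputable def xx (v : V) : LL V := algebraMap (MvPolynomial V ℚ) (LL V) (X v)

/-- The difference `x_u - x_v`. -/
noncomputable def dd (u v : V) : LL V := xx u - xx v

lemma xx_injective : Function.Injective (xx : V → LL V) := by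
  intro u v h
  exact X_injective (IsFractionRing.injective _ _ h)

lemma dd_ne {u v : V} (h : u ≠ v) : dd u v ≠ 0 :=
  sub_ne_zero.2 fun huv => h (xx_injective huv)

/-- `x_u - x_v`, with the junk value `1` on the diagonal so that it is always invertible. -/
noncomputable def dl (u v : V) : LL V := if u = v then 1 else dd u v

lemma dl_ne (u v : V) : dl u v ≠ 0 := by
  unfold dl
  split_ifs with h
  · exact one_ne_zero
  · exact dd_ne h

/-- The product `∏ (x_u - x_v) ^ M u v` over all ordered pairs; the sign is absorbed, as
`(x_u - x_v) / (x_v - x_u) = -1`. -/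
noncomputable def Rep (M : V → V → ℤ) : LL V := ∏ u, ∏ v, dl u v ^ M u v

/-- Total exponent of the unordered pair `{u, v}` (meaningful for `u ≠ v`). -/
def EE (M : V → V → ℤ) (u v : V) : ℤ := M u v + M v u

lemma Rep_ne (M : V → V → ℤ) : Rep M ≠ 0 :=
  Finset.prod_ne_zero_iff.2 fun u _ => Finset.prod_ne_zero_iff.2 fun v _ =>
    zpow_ne_zero _ (dl_ne u v)

lemma Rep_add (M N : V → V → ℤ) : Rep (M + N) = Rep M * Rep N := by
  simp only [Rep, Pi.add_apply, zpow_add₀ (dl_ne _ _), Finset.prod_mul_distrib]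

lemma Rep_zero : Rep (0 : V → V → ℤ) = 1 := by simp [Rep]

lemma Rep_neg (M : V → V → ℤ) : Rep (-M) = (Rep M)⁻¹ := by
  apply eq_inv_of_mul_eq_one_left
  rw [← Rep_add, neg_add_cancel, Rep_zero]

lemma Rep_sub (M N : V → V → ℤ) : Rep (M - N) = Rep M / Rep N := by
  rw [sub_eq_add_neg, Rep_add, Rep_neg, div_eq_mul_inv]

lemma Rep_nsmul (m : ℕ) (M : V → V → ℤ) : Rep (m • M) = Rep M ^ m := by
  induction m with
  | zero => simp [Rep_zero]
  | succ m ih => rw [succ_nsmul, Rep_add, ih, pow_succ]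

/-- Exponent matrix with a single `1` at the ordered pair `(i, j)`. -/
def sg (i j : V) : V → V → ℤ := fun u v => if u = i ∧ v = j then 1 else 0

lemma Rep_sg {i j : V} (h : i ≠ j) : Rep (sg i j) = dd i j := by
  unfold Rep sg
  rw [Finset.prod_eq_single i, Finset.prod_eq_single j]
  · simp [dl, h]
  · intro b _ hb; simp [hb]
  · simp
  · intro b _ hb; simp [hb]
  · simp

/-- Evaluation of polynomials at a family of points. -/
noncomputable abbrev evp {F : Type*} [Field F] [Algebra ℚ F] (p : V → F) : MvPolynomial V ℚ →+* F :=
  (aeval p).toRingHom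

lemma spec_dd {F : Type*} [Field F] [Algebra ℚ F] (p : V → F) (u v : V) :
    Spec (evp p) (dd u v) (p u - p v) := by
  have h : ∀ v, Spec (evp p) (xx v) (p v) := fun v => by
    simpa [evp, xx] using Spec.of (ev := evp p) (X v)
  exact (h u).sub (h v)

lemma spec_Rep (p : V → ℚ) (hp : Function.Injective p) (M : V → V → ℤ) :
    Spec (evp p) (Rep M) (∏ u, ∏ v, (if u = v then 1 else p u - p v) ^ M u v) := by
  refine Spec.prod _ fun u _ => Spec.prod _ fun v _ => Spec.zpow ?_ ?_ _
  · unfold dl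
    split_ifs
    · exact Spec.one
    · exact spec_dd p u v
  · split_ifs with h
    · exact one_ne_zero
    · exact sub_ne_zero.2 fun huv => h (hp huv)

/-- A product of differences is determined up to sign by the exponents of unordered pairs. -/
lemma Rep_sq_of_EE_zero {M : V → V → ℤ} (h : ∀ u v, u ≠ v → EE M u v = 0) :
    Rep M = 1 ∨ Rep M = -1 := by
  have hpm : ∀ u v : V, (dl u v / dl v u) = 1 ∨ (dl u v / dl v u) = -1 := by
    intro u v
    by_cases huv : u = v
    · subst huv; left; exact div_self (dl_ne u u)
    · right
      have := dd_ne (Ne.symm huv)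
      rw [dl, dl, if_neg huv, if_neg (Ne.symm huv), div_eq_iff this]
      simp [dd]
  have h2 : Rep M ^ 2 = ∏ u, ∏ v, (dl u v / dl v u) ^ M u v := by
    rw [pow_two]
    conv_lhs => rw [Rep]; arg 2; rw [Finset.prod_comm]
    rw [← Finset.prod_mul_distrib]
    refine Finset.prod_congr rfl fun u _ => ?_
    rw [← Finset.prod_mul_distrib]
    refine Finset.prod_congr rfl fun v _ => ?_
    by_cases huv : u = v
    · subst huv; simp [dl]
    · have : M v u = - M u v := by have := h u v huv; unfold EE at this; omega
      rw [this, zpow_neg, div_zpow, div_eq_mul_inv]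
  have h3 : ∀ (s : Finset (V × V)) (f : V × V → LL V), (∀ a ∈ s, f a = 1 ∨ f a = -1) →
      ∏ a ∈ s, f a = 1 ∨ ∏ a ∈ s, f a = -1 := by
    intro s f hf
    induction s using Finset.induction_on with
    | empty => simp
    | insert a s ha ih =>
      rw [Finset.prod_insert ha]
      rcases hf a (by simp) with h | h <;> rcases ih (fun b hb => hf b (by simp [hb])) with h' | h'
        <;> simp [h, h']
  have h4 : Rep M ^ 2 = 1 ∨ Rep M ^ 2 = -1 := by
    rw [h2, ← Finset.prod_product']
    apply h3
    rintro ⟨u, v⟩ _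
    rcases hpm u v with h | h
    · simp [h]
    · simp only [h]
      exact (Int.even_or_odd (M u v)).imp (fun h => h.neg_one_zpow) fun h => h.neg_one_zpow
  rcases h4 with h4 | h4
  · exact sq_eq_one_iff.1 h4
  · -- a specialization to `ℚ` would give a rational square root of `-1`
    exfalso
    let p : V → ℚ := fun v => ((Fintype.equivFin V v : ℕ) : ℚ)
    have hp : Function.Injective p := by
      intro u v huv
      simp only [p, Nat.cast_inj, Fin.val_inj, EmbeddingLike.apply_eq_iff_eq] at huv
      exact huv
    have h5 := (spec_Rep p hp M).pow 2
    rw [h4] at h5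
    have h6 := h5.unique Spec.one.neg
    nlinarith [sq_nonneg (∏ u, ∏ v, (if u = v then (1 : ℚ) else p u - p v) ^ M u v)]

lemma Rep_eq_or_neg {M N : V → V → ℤ} (h : ∀ u v, u ≠ v → EE M u v = EE N u v) :
    Rep M = Rep N ∨ Rep M = -Rep N := by
  have := Rep_sq_of_EE_zero (M := M - N) fun u v huv => by
    have := h u v huv
    simp only [EE, Pi.sub_apply] at *
    omega
  rw [Rep_sub, div_eq_iff (Rep_ne N), div_eq_iff (Rep_ne N)] at this
  simpa using this

/-! ### Valuations -/

/-- Pairing of an exponent matrix with a weight. -/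
def wt (w : V → V → ℕ) (M : V → V → ℤ) : ℤ := ∑ u, ∑ v, M u v * w u v

/-- `w` is the matrix of `P`-adic valuations of the differences of some family of integers. -/
def IsWeight (w : V → V → ℕ) : Prop :=
  (∀ u, w u u = 0) ∧ ∃ (P : ℕ) (p : V → ℤ), P.Prime ∧
    ∀ u v, u ≠ v → ∃ y : ℤ, ¬ (P : ℤ) ∣ y ∧ p u - p v = (P : ℤ) ^ w u v * y

lemma padicValRat_prod {ι : Type*} (P : ℕ) [Fact P.Prime] (s : Finset ι) (f : ι → ℚ)
    (h : ∀ i ∈ s, f i ≠ 0) : padicValRat P (∏ i ∈ s, f i) = ∑ i ∈ s, padicValRat P (f i) := by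
  classical
  induction s using Finset.induction_on with
  | empty => simp
  | insert a s ha ih =>
    rw [Finset.prod_insert ha, Finset.sum_insert ha, padicValRat.mul (h a (by simp))
      (Finset.prod_ne_zero_iff.2 fun i hi => h i (by simp [hi])), ih fun i hi => h i (by simp [hi])]

/-- A weight yields a specialization to `ℚ` whose `P`-adic valuation computes `wt w`. -/
lemma IsWeight.exists_spec {w : V → V → ℕ} (hw : IsWeight w) :
    ∃ (P : ℕ) (p : V → ℚ), P.Prime ∧ ∀ M, ∃ q : ℚ, q ≠ 0 ∧ Spec (evp p) (Rep M) q ∧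
      padicValRat P q = wt w M := by
  obtain ⟨h0, P, p, hP, hp⟩ := hw
  have : Fact P.Prime := ⟨hP⟩
  have hPz : ((P : ℚ)) ≠ 0 := by exact_mod_cast hP.ne_zero
  have hne : ∀ u v, u ≠ v → ((p u : ℚ) - p v ≠ 0 ∧ padicValRat P ((p u : ℚ) - p v) = w u v) := by
    intro u v huv
    obtain ⟨y, hy, h⟩ := hp u v huv
    have hy0 : y ≠ 0 := by rintro rfl; simp at hy
    have hyq : (y : ℚ) ≠ 0 := by exact_mod_cast hy0
    have h' : (p u : ℚ) - p v = (P : ℚ) ^ w u v * y := by exact_mod_cast h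
    rw [h']
    refine ⟨mul_ne_zero (pow_ne_zero _ hPz) hyq, ?_⟩
    rw [padicValRat.mul (pow_ne_zero _ hPz) hyq, padicValRat.pow, padicValRat.self hP.one_lt,
      padicValRat.of_int, padicValInt.eq_zero_of_not_dvd hy]
    simp
  have hinj : Function.Injective fun v => (p v : ℚ) := by
    intro u v huv
    by_contra h
    exact (hne u v h).1 (sub_eq_zero.2 huv)
  have hfac : ∀ u v, (if u = v then 1 else (p u : ℚ) - p v) ≠ 0 := by
    intro u v
    split_ifs with h
    · exact one_ne_zero
    · exact (hne u v h).1
  refine ⟨P, fun v => p v, hP, fun M => ⟨_, ?_, spec_Rep _ hinj M, ?_⟩⟩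
  · exact Finset.prod_ne_zero_iff.2 fun u _ => Finset.prod_ne_zero_iff.2 fun v _ =>
      zpow_ne_zero _ (hfac u v)
  · rw [padicValRat_prod]
    · refine Finset.sum_congr rfl fun u _ => ?_
      rw [padicValRat_prod]
      · refine Finset.sum_congr rfl fun v _ => ?_
        rw [padicValRat.zpow]
        split_ifs with h
        · subst h; simp [h0]
        · rw [(hne u v h).2]
      · exact fun v _ => zpow_ne_zero _ (hfac u v)
    · exact fun u _ => Finset.prod_ne_zero_iff.2 fun v _ => zpow_ne_zero _ (hfac u v)

lemma IsWeight.wt_eq {w : V → V → ℕ} (hw : IsWeight w) {M N : V → V → ℤ} (h : Rep M = Rep N) :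
    wt w M = wt w N := by
  obtain ⟨P, p, hP, H⟩ := hw.exists_spec
  obtain ⟨q, _, h1, h2⟩ := H M
  obtain ⟨q', _, h3, h2'⟩ := H N
  rw [h] at h1
  rw [← h2, ← h2', h1.unique h3]

/-- The minimum of three integers is attained at least twice. -/
def TwoMin (a b c : ℤ) : Prop := (a = b ∧ a ≤ c) ∨ (a = c ∧ a ≤ b) ∨ (b = c ∧ b ≤ a)

lemma twoMin_of_sum {P : ℕ} (hP : P.Prime) {x y z : ℚ} (hx : x ≠ 0) (hy : y ≠ 0) (hz : z ≠ 0)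
    (h : x + y = z) : TwoMin (padicValRat P x) (padicValRat P y) (padicValRat P z) := by
  have : Fact P.Prime := ⟨hP⟩
  have h1 := padicValRat.min_le_padicValRat_add (p := P) (q := x) (r := y) (by rwa [h])
  have h2 := padicValRat.min_le_padicValRat_add (p := P) (q := z) (r := -y)
    (by rw [← h]; simpa using hx)
  have h3 := padicValRat.min_le_padicValRat_add (p := P) (q := z) (r := -x)
    (by rw [← h]; simpa using hy)
  rw [show z + -y = x by rw [← h]; ring, padicValRat.neg] at h2
  rw [show z + -x = y by rw [← h]; ring, padicValRat.neg] at h3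
  rw [h] at h1
  unfold TwoMin
  omega

lemma IsWeight.twoMin {w : V → V → ℕ} (hw : IsWeight w) {M N K : V → V → ℤ}
    (h : Rep M + Rep N = Rep K) : TwoMin (wt w M) (wt w N) (wt w K) := by
  obtain ⟨P, p, hP, H⟩ := hw.exists_spec
  obtain ⟨q, h0, h1, h2⟩ := H M
  obtain ⟨q', h0', h1', h2'⟩ := H N
  obtain ⟨q'', h0'', h5, h2''⟩ := H K
  rw [← h2, ← h2', ← h2'']
  refine twoMin_of_sum hP h0 h0' h0'' ?_
  rw [← h] at h5
  exact (h1.add h1').unique h5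

/-- Indicator of the unordered pair `{i, j}`. -/
def ed (i j : V) : V → V → ℕ := fun u v => if (u = i ∧ v = j) ∨ (u = j ∧ v = i) then 1 else 0

lemma sum_ed {i j : V} (hij : i ≠ j) (M : V → V → ℤ) :
    ∑ u, ∑ v, M u v * (ed i j u v : ℤ) = EE M i j := by
  have h : ∀ u v, (ed i j u v : ℤ) = (if u = i then (if v = j then 1 else 0) else 0) +
      (if u = j then (if v = i then 1 else 0) else 0) := by
    intro u v
    unfold ed
    split_ifs <;> simp_all
  simp only [h, mul_add, Finset.sum_add_distrib, mul_ite, mul_one, mul_zero]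
  have : ∀ i j, ∑ x, ∑ x_1, (if x = i then if x_1 = j then M x x_1 else 0 else 0) = M i j := by
    intro i j
    rw [Finset.sum_eq_single i]
    · simp
    · intro b _ hb; simp [hb]
    · simp
  rw [this, this, EE]

/-- The integers `c (r v) + P * s P v`, where `c` numbers the points by `0, …, |V| - 1` and
`P ≥ |V|` is prime, realize `w`. -/
lemma isWeight_mk (w : V → V → ℕ) (r : V → V) (s : ℕ → V → ℤ) (h0 : ∀ u, w u u = 0)
    (h1 : ∀ u v, r u ≠ r v → w u v = 0)
    (h2 : ∀ P : ℕ, P.Prime → ∀ u v, u ≠ v → r u = r v → ∃ y : ℤ, ¬ (P : ℤ) ∣ y ∧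
      P * (s P u - s P v) = (P : ℤ) ^ w u v * y) : IsWeight w := by
  obtain ⟨P, hP, hPp⟩ := Nat.exists_infinite_primes (Fintype.card V)
  let c : V → ℤ := fun v => ((Fintype.equivFin V v : ℕ) : ℤ)
  have hc : ∀ u v, u ≠ v → ¬ (P : ℤ) ∣ c u - c v := by
    intro u v huv hd
    have hu := (Fintype.equivFin V u).2
    have hv := (Fintype.equivFin V v).2
    have hne : (Fintype.equivFin V u : ℕ) ≠ (Fintype.equivFin V v : ℕ) := by
      simpa [Fin.val_inj] using huv
    have := Int.eq_zero_of_abs_lt_dvd hd (by simp only [c]; rw [abs_lt]; omega)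
    simp only [c] at this
    omega
  refine ⟨h0, P, fun v => c (r v) + P * s P v, hPp, fun u v huv => ?_⟩
  by_cases hr : r u = r v
  · obtain ⟨y, hy, h⟩ := h2 P hPp u v huv hr
    refine ⟨y, hy, ?_⟩
    rw [← h]; simp only [hr]; ring
  · refine ⟨_, ?_, by rw [h1 u v hr, pow_zero, one_mul]⟩
    intro hd
    apply hc _ _ hr
    have : c (r u) - c (r v) = (c (r u) + P * s P u - (c (r v) + P * s P v)) -
      P * (s P u - s P v) := by ring
    rw [this]
    exact dvd_sub hd (dvd_mul_right _ _)

lemma not_dvd_one {P : ℕ} (hP : P.Prime) : ¬ (P : ℤ) ∣ 1 := by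
  intro h
  have := Int.eq_one_of_dvd_one (by positivity) h
  exact hP.one_lt.ne' (by exact_mod_cast this)

lemma not_dvd_neg_one {P : ℕ} (hP : P.Prime) : ¬ (P : ℤ) ∣ -1 := by
  rw [dvd_neg]; exact not_dvd_one hP

/-- Two disjoint pairs of points collide, to orders `N + 1` and `1`. -/
lemma isWeight_two {i j a b : V} (hij : i ≠ j) (hab : a ≠ b) (hia : i ≠ a) (hib : i ≠ b)
    (hja : j ≠ a) (hjb : j ≠ b) (N : ℕ) :
    IsWeight fun u v => (N + 1) * ed i j u v + ed a b u v := by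
  refine isWeight_mk _ (fun v => if v = i then j else if v = a then b else v)
    (fun P v => if v = i then (P : ℤ) ^ N else if v = a then 1 else 0) ?_ ?_ ?_
  · intro u; unfold ed; grind
  · intro u v; unfold ed; grind
  · intro P hP u v huv hr
    have e1 := not_dvd_one hP
    have e2 := not_dvd_neg_one hP
    have : (u = i ∧ v = j) ∨ (u = j ∧ v = i) ∨ (u = a ∧ v = b) ∨ (u = b ∧ v = a) := by grind
    rcases this with ⟨rfl, rfl⟩ | ⟨rfl, rfl⟩ | ⟨rfl, rfl⟩ | ⟨rfl, rfl⟩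
    · refine ⟨1, e1, ?_⟩
      simp [ed, *, Ne.symm hij]; ring
    · refine ⟨-1, e2, ?_⟩
      simp [ed, *]; ring
    · refine ⟨1, e1, ?_⟩
      simp [ed, *, Ne.symm hia, Ne.symm hja, Ne.symm hab, Ne.symm hib]
    · refine ⟨-1, e2, ?_⟩
      simp [ed, *, Ne.symm hia, Ne.symm hja, Ne.symm hab, Ne.symm hib]

/-- Three points collide, two of them to a higher order. -/
lemma isWeight_three {i j a : V} (hij : i ≠ j) (hia : i ≠ a) (hja : j ≠ a) (N : ℕ) :
    IsWeight fun u v => (N + 2) * ed i j u v + (ed i a u v + ed j a u v) := by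
  refine isWeight_mk _ (fun v => if v = i then j else if v = a then j else v)
    (fun P v => if v = i then (P : ℤ) ^ (N + 1) else if v = a then 1 else 0) ?_ ?_ ?_
  · intro u; unfold ed; grind
  · intro u v; unfold ed; grind
  · intro P hP u v huv hr
    have e1 := not_dvd_one hP
    have e2 := not_dvd_neg_one hP
    have e3 : ¬ (P : ℤ) ∣ P ^ (N + 1) - 1 := by
      intro h
      apply e1
      have := dvd_sub (dvd_pow_self (P : ℤ) (Nat.succ_ne_zero N)) h
      simpa using this
    have e4 : ¬ (P : ℤ) ∣ 1 - P ^ (N + 1) := by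
      intro h
      apply e3
      rw [← dvd_neg]
      simpa using h
    have : (u = i ∧ v = j) ∨ (u = j ∧ v = i) ∨ (u = a ∧ v = j) ∨ (u = j ∧ v = a) ∨
      (u = i ∧ v = a) ∨ (u = a ∧ v = i) := by grind
    rcases this with ⟨rfl, rfl⟩ | ⟨rfl, rfl⟩ | ⟨rfl, rfl⟩ | ⟨rfl, rfl⟩ | ⟨rfl, rfl⟩ | ⟨rfl, rfl⟩
    · refine ⟨1, e1, ?_⟩
      simp [ed, *, Ne.symm hij]; ring
    · refine ⟨-1, e2, ?_⟩
      simp [ed, *]; ring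
    · refine ⟨1, e1, ?_⟩
      simp [ed, *, Ne.symm hia, Ne.symm hja, Ne.symm hij]
    · refine ⟨-1, e2, ?_⟩
      simp [ed, *, Ne.symm hia, Ne.symm hij]
    · refine ⟨_, e3, ?_⟩
      simp [ed, *, Ne.symm hia, Ne.symm hja]
    · refine ⟨_, e4, ?_⟩
      simp [ed, *, Ne.symm hia, Ne.symm hja]

/-- Two points collide to first order. -/
lemma isWeight_one {i j : V} (hij : i ≠ j) : IsWeight (ed i j) := by
  refine isWeight_mk _ (fun v => if v = i then j else v)
    (fun P v => if v = i then 1 else 0) ?_ ?_ ?_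
  · intro u; unfold ed; grind
  · intro u v; unfold ed; grind
  · intro P hP u v huv hr
    have e1 := not_dvd_one hP
    have e2 := not_dvd_neg_one hP
    have : (u = i ∧ v = j) ∨ (u = j ∧ v = i) := by grind
    rcases this with ⟨rfl, rfl⟩ | ⟨rfl, rfl⟩
    · refine ⟨1, e1, ?_⟩
      simp [ed, Ne.symm hij]
    · refine ⟨-1, e2, ?_⟩
      simp [ed, *]

lemma EE_eq_of_Rep_eq {M N : V → V → ℤ} (h : Rep M = Rep N) {i j : V} (hij : i ≠ j) :
    EE M i j = EE N i j := by
  have := (isWeight_one hij).wt_eq h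
  rwa [wt, wt, sum_ed hij, sum_ed hij] at this

lemma twoMin_EE {M N K : V → V → ℤ} (h : Rep M + Rep N = Rep K) {i j : V} (hij : i ≠ j) :
    TwoMin (EE M i j) (EE N i j) (EE K i j) := by
  have := (isWeight_one hij).twoMin h
  rwa [wt, wt, wt, sum_ed hij, sum_ed hij, sum_ed hij] at this

lemma twoMin_disjoint {M N K : V → V → ℤ} (h : Rep M + Rep N = Rep K) {i j a b : V} (hij : i ≠ j)
    (hab : a ≠ b) (hia : i ≠ a) (hib : i ≠ b) (hja : j ≠ a) (hjb : j ≠ b) (n : ℕ) :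
    TwoMin ((n + 1) * EE M i j + EE M a b) ((n + 1) * EE N i j + EE N a b)
      ((n + 1) * EE K i j + EE K a b) := by
  have := (isWeight_two hij hab hia hib hja hjb n).twoMin h
  have key : ∀ M : V → V → ℤ, wt (fun u v => (n + 1) * ed i j u v + ed a b u v) M =
      (n + 1) * EE M i j + EE M a b := by
    intro M
    rw [← sum_ed hij, ← sum_ed hab, Finset.mul_sum, ← Finset.sum_add_distrib, wt]
    refine Finset.sum_congr rfl fun u _ => ?_
    rw [Finset.mul_sum, ← Finset.sum_add_distrib]
    refine Finset.sum_congr rfl fun v _ => ?_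
    push_cast; ring
  rwa [key, key, key] at this

lemma twoMin_triangle {M N K : V → V → ℤ} (h : Rep M + Rep N = Rep K) {i j a : V} (hij : i ≠ j)
    (hia : i ≠ a) (hja : j ≠ a) (n : ℕ) :
    TwoMin ((n + 2) * EE M i j + (EE M i a + EE M j a))
      ((n + 2) * EE N i j + (EE N i a + EE N j a))
      ((n + 2) * EE K i j + (EE K i a + EE K j a)) := by
  have := (isWeight_three hij hia hja n).twoMin h
  have key : ∀ M : V → V → ℤ, wt (fun u v => (n + 2) * ed i j u v + (ed i a u v + ed j a u v)) M =
      (n + 2) * EE M i j + (EE M i a + EE M j a) := by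
    intro M
    rw [← sum_ed hij, ← sum_ed hia, ← sum_ed hja, Finset.mul_sum, ← Finset.sum_add_distrib,
      ← Finset.sum_add_distrib, wt]
    refine Finset.sum_congr rfl fun u _ => ?_
    rw [Finset.mul_sum, ← Finset.sum_add_distrib, ← Finset.sum_add_distrib]
    refine Finset.sum_congr rfl fun v _ => ?_
    push_cast; ring
  rwa [key, key, key] at this

/-! ### Classification of three-term relations -/

/-- Every point has total exponent zero. -/
def DegZero (M : V → V → ℤ) : Prop := ∀ u, ∑ v ∈ Finset.univ.erase u, EE M u v = 0

/-- Combinatorial shadow of a three-term relation: the exponents of its three terms, with the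
constraints provided by valuations. -/
structure Tri (A B C : V → V → ℤ) : Prop where
  symA : ∀ u v, A u v = A v u
  symB : ∀ u v, B u v = B v u
  symC : ∀ u v, C u v = C v u
  degA : ∀ u, ∑ v ∈ Finset.univ.erase u, A u v = 0
  degB : ∀ u, ∑ v ∈ Finset.univ.erase u, B u v = 0
  degC : ∀ u, ∑ v ∈ Finset.univ.erase u, C u v = 0
  two : ∀ i j, i ≠ j → TwoMin (A i j) (B i j) (C i j)
  disj : ∀ i j a b, i ≠ j → a ≠ b → i ≠ a → i ≠ b → j ≠ a → j ≠ b → ∀ n : ℕ,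
    TwoMin ((n + 1) * A i j + A a b) ((n + 1) * B i j + B a b) ((n + 1) * C i j + C a b)
  tri : ∀ i j a, i ≠ j → i ≠ a → j ≠ a → ∀ n : ℕ,
    TwoMin ((n + 2) * A i j + (A i a + A j a)) ((n + 2) * B i j + (B i a + B j a))
      ((n + 2) * C i j + (C i a + C j a))

lemma TwoMin.rot {a b c : ℤ} (h : TwoMin a b c) : TwoMin b c a := by
  unfold TwoMin at *; omega

lemma TwoMin.swap {a b c : ℤ} (h : TwoMin a b c) : TwoMin a c b := by
  unfold TwoMin at *; omega

namespace Tri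

variable {A B C : V → V → ℤ}

lemma rot (T : Tri A B C) : Tri B C A where
  symA := T.symB
  symB := T.symC
  symC := T.symA
  degA := T.degB
  degB := T.degC
  degC := T.degA
  two i j h := (T.two i j h).rot
  disj i j a b h1 h2 h3 h4 h5 h6 n := (T.disj i j a b h1 h2 h3 h4 h5 h6 n).rot
  tri i j a h1 h2 h3 n := (T.tri i j a h1 h2 h3 n).rot

lemma swap (T : Tri A B C) : Tri A C B where
  symA := T.symA
  symB := T.symC
  symC := T.symB
  degA := T.degA
  degB := T.degC
  degC := T.degB
  two i j h := (T.two i j h).swap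
  disj i j a b h1 h2 h3 h4 h5 h6 n := (T.disj i j a b h1 h2 h3 h4 h5 h6 n).swap
  tri i j a h1 h2 h3 n := (T.tri i j a h1 h2 h3 n).swap

/-- If the first term is the largest with respect to the main weight, then for large `n` the minimum
is attained at the other two, so their secondary weights agree. -/
lemma dominate {a b c a' b' c' : ℤ} (k : ℕ) (hk : 1 ≤ k)
    (h : ∀ n : ℕ, TwoMin ((n + k) * a + a') ((n + k) * b + b') ((n + k) * c + c'))
    (hbc : b = c) (hab : b < a) : b' = c' := by
  subst hbc
  have h1 := h (|a'| + |b'| + |c'|).toNat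
  rw [Int.toNat_of_nonneg (by positivity)] at h1
  set n := |a'| + |b'| + |c'| + (k : ℤ) with hn
  have hk' : (1 : ℤ) ≤ k := by exact_mod_cast hk
  have h2 : n * b + n ≤ n * a := by
    have : 0 ≤ n := by positivity
    nlinarith
  have := abs_le.1 (le_refl |a'|)
  have := abs_le.1 (le_refl |b'|)
  have := abs_le.1 (le_refl |c'|)
  rcases h1 with h1 | h1 | h1
  · omega
  · omega
  · omega

/-- If the first term vanishes to higher order on `x_i = x_j`, then the other two terms agree
there; this and `tri'` express their equality on that divisor. -/
lemma disj' (T : Tri A B C) {i j : V} (a b : V) (hij : i ≠ j) (hab : a ≠ b) (hia : i ≠ a)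
    (hib : i ≠ b) (hja : j ≠ a) (hjb : j ≠ b) (h1 : B i j < A i j) (h2 : B i j = C i j) :
    B a b = C a b :=
  dominate 1 le_rfl (by simpa using T.disj i j a b hij hab hia hib hja hjb) h2 h1

lemma tri' (T : Tri A B C) {i j : V} (a : V) (hij : i ≠ j) (hia : i ≠ a)
    (hja : j ≠ a) (h1 : B i j < A i j) (h2 : B i j = C i j) :
    B i a + B j a = C i a + C j a :=
  dominate 2 (by simp) (by simpa using T.tri i j a hij hia hja) h2 h1

lemma exists_lt (T : Tri A B C) {i j : V} (hij : i ≠ j) (h : C i j < A i j) :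
    ∃ a, i ≠ a ∧ A i a < C i a := by
  by_contra! hc
  have h1 : ∑ v ∈ Finset.univ.erase i, C i v < ∑ v ∈ Finset.univ.erase i, A i v :=
    Finset.sum_lt_sum (fun v hv => hc v (Finset.ne_of_mem_erase hv).symm)
      ⟨j, by simp [hij.symm], h⟩
  rw [T.degA, T.degC] at h1
  exact lt_irrefl _ h1

/-- No term dominates on an edge leaving the `4`-set. -/
lemma outside (T : Tri A B C) {i j a b u v : V} (hij : i ≠ j) (hia : i ≠ a)
    (hja : j ≠ a) (hjb : j ≠ b) (hab : a ≠ b)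
    (e1 : B i a ≠ C i a) (e2 : B j a ≠ C j a) (e4 : B j b ≠ C j b)
    (hi : v ≠ i) (hj : v ≠ j) (ha : v ≠ a) (hb : v ≠ b) (huv : u ≠ v)
    (h1 : B u v < A u v) (h2 : B u v = C u v) : False := by
  by_cases hui : u = i
  · subst hui
    exact e2 (T.disj' j a huv hja hij hia hj ha h1 h2)
  by_cases hua : u = a
  · subst hua
    exact e4 (T.disj' j b huv hjb hja.symm hab hj hb h1 h2)
  exact e1 (T.disj' i a huv hia hui hua hi ha h1 h2)

end Tri

/-- Exponent matrix of the cross-ratio `cr i j a b`. -/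
def Mcr (i j a b : V) : V → V → ℤ := sg i j + sg a b - sg i a - sg j b

lemma EE_Mcr (i j a b u v : V) (hij : i ≠ j) (hia : i ≠ a) (hjb : j ≠ b) (hab : a ≠ b) :
    EE (Mcr i j a b) u v =
      (ed i j u v : ℤ) + ed a b u v - ed i a u v - ed j b u v := by
  have : ∀ i j : V, i ≠ j → sg i j u v + sg i j v u = (ed i j u v : ℤ) := by
    intro i j h
    unfold sg ed
    grind
  rw [← this i j hij, ← this a b hab, ← this i a hia, ← this j b hjb]
  simp only [EE, Mcr, Pi.add_apply, Pi.sub_apply]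
  ring

lemma eq_mul_EE_Mcr {D : V → V → ℤ} {m : ℤ} {i j a b : V} (hij : i ≠ j) (hia : i ≠ a)
    (hib : i ≠ b) (hja : j ≠ a) (hjb : j ≠ b) (hab : a ≠ b) (sym : ∀ u v, D u v = D v u)
    (h1 : D i j = m) (h2 : D a b = m) (h3 : D i a = -m) (h4 : D j b = -m) (h5 : D i b = 0)
    (h6 : D j a = 0)
    (out : ∀ u v, u ≠ v → v ≠ i → v ≠ j → v ≠ a → v ≠ b → D u v = 0) (u v : V) (huv : u ≠ v) :
    D u v = m * EE (Mcr i j a b) u v := by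
  rw [EE_Mcr i j a b u v hij hia hjb hab]
  unfold ed
  by_cases hv : v ≠ i ∧ v ≠ j ∧ v ≠ a ∧ v ≠ b
  · have := out u v huv hv.1 hv.2.1 hv.2.2.1 hv.2.2.2
    simp [hv, this]
  by_cases hu : u ≠ i ∧ u ≠ j ∧ u ≠ a ∧ u ≠ b
  · have := out v u huv.symm hu.1 hu.2.1 hu.2.2.1 hu.2.2.2
    rw [sym u v]
    simp [hu, this]
  have hv' : v = i ∨ v = j ∨ v = a ∨ v = b := by tauto
  have hu' : u = i ∨ u = j ∨ u = a ∨ u = b := by tauto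
  clear hv hu out
  have h1' := (sym j i).trans h1
  have h2' := (sym b a).trans h2
  have h3' := (sym a i).trans h3
  have h4' := (sym b j).trans h4
  have h5' := (sym b i).trans h5
  have h6' := (sym a j).trans h6
  clear sym
  have := hij.symm; have := hia.symm; have := hib.symm
  have := hja.symm; have := hjb.symm; have := hab.symm
  rcases hu' with rfl | rfl | rfl | rfl <;> rcases hv' with rfl | rfl | rfl | rfl <;>
    simp [*] at huv ⊢

/-- Relative to the third term, the exponents of a nontrivial three-term relation are `m` times
those of two complementary cross-ratios `cr i j a b` and `cr i b a j`. -/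
lemma Tri.classify {A B C : V → V → ℤ} (T : Tri A B C)
    (hne : ¬ ∀ u v, u ≠ v → A u v = C u v ∧ B u v = C u v) :
    ∃ (i j a b : V) (m : ℕ), i ≠ j ∧ i ≠ a ∧ i ≠ b ∧ j ≠ a ∧ j ≠ b ∧ a ≠ b ∧ 1 ≤ m ∧
      (∀ u v, u ≠ v → A u v - C u v = m * EE (Mcr i j a b) u v) ∧
      (∀ u v, u ≠ v → B u v - C u v = m * EE (Mcr i b a j) u v) := by
  -- an edge on which the first term dominates
  obtain ⟨i, j, hij, h1, h2⟩ : ∃ i j, i ≠ j ∧ B i j < A i j ∧ B i j = C i j := by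
    push Not at hne
    obtain ⟨u, v, huv, h⟩ := hne
    have key : ∀ i j, i ≠ j → C i j < A i j → B i j < A i j ∧ B i j = C i j := by
      intro i j hij h
      have := T.two i j hij
      unfold TwoMin at this
      omega
    have key' : ∀ i j, i ≠ j → B i j < A i j → B i j < A i j ∧ B i j = C i j := by
      intro i j hij h
      have := T.two i j hij
      unfold TwoMin at this
      omega
    have h0 := T.two u v huv
    have h3 : C u v < A u v ∨ A u v < C u v ∨ A u v < B u v := by
      unfold TwoMin at h0
      by_cases h' : A u v = C u v
      · have := h h'; omega
      · omega
    rcases h3 with h3 | h3 | h3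
    · exact ⟨u, v, huv, key u v huv h3⟩
    · obtain ⟨w, hw, h4⟩ := T.rot.rot.swap.exists_lt (i := u) (j := v) huv h3
      exact ⟨u, w, hw, key u w hw h4⟩
    · obtain ⟨w, hw, h4⟩ := T.rot.exists_lt (i := u) (j := v) huv h3
      exact ⟨u, w, hw, key' u w hw h4⟩
  -- the third term dominates on `ia`, hence the second on `ja`
  obtain ⟨a, hia, h3⟩ := T.exists_lt hij (h2 ▸ h1)
  have hja : j ≠ a := by rintro rfl; omega
  have h3' : A i a = B i a := by
    have := T.two i a hia
    unfold TwoMin at this; omega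
  have h4 := T.tri' a hij hia hja h1 h2
  have h4' : A j a = C j a := by
    have := T.two j a hja
    unfold TwoMin at this; omega
  -- the second term dominates on `ib`, hence the third on `jb` and the first on `ab`
  obtain ⟨b, hib, h5⟩ := T.rot.rot.exists_lt (i := i) (j := a) hia
    (by omega)
  have hab : a ≠ b := by rintro rfl; omega
  have hjb : j ≠ b := by rintro rfl; omega
  have h5' : A i b = C i b := by
    have := T.two i b hib
    unfold TwoMin at this; omega
  have h6 := T.tri' b hij hib hjb h1 h2
  have h6' : A j b = B j b := by
    have := T.two j b hjb
    unfold TwoMin at this; omega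
  have h7 := T.rot.rot.tri' b hia hib hab (by omega) h3'
  have h7' : B a b = C a b := by
    have := T.two a b hab
    unfold TwoMin at this; omega
  -- the multiplicities agree
  have h8 := T.rot.rot.tri' j hia hij hja.symm (by omega) h3'
  have h9 := T.rot.rot.tri' i hjb hij.symm hib.symm (by omega) h6'
  have s1 := T.symA; have s2 := T.symB; have s3 := T.symC
  have := s1 j i; have := s2 j i; have := s3 j i
  have := s1 a j; have := s2 a j; have := s3 a j
  have := s1 b i; have := s2 b i; have := s3 b i
  have := s1 b j; have := s2 b j; have := s3 b j
  have := s1 b a; have := s2 b a; have := s3 b a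
  have out : ∀ u v, u ≠ v → v ≠ i → v ≠ j → v ≠ a → v ≠ b →
      A u v = C u v ∧ B u v = C u v := by
    intro u v huv hvi hvj hva hvb
    have hA : ¬ (B u v < A u v ∧ B u v = C u v) := fun h =>
      T.outside hij hia hja hjb hab (by omega) (by omega) (by omega) hvi hvj hva hvb huv h.1 h.2
    have hB : ¬ (C u v < B u v ∧ C u v = A u v) := fun h =>
      T.rot.outside hib hij hjb.symm hab.symm hja (by omega) (by omega) (by omega)
        hvi hvb hvj hva huv h.1 h.2
    have hC : ¬ (A u v < C u v ∧ A u v = B u v) := fun h =>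
      T.rot.rot.outside hia hij hja.symm hab hjb (by omega) (by omega) (by omega)
        hvi hva hvj hvb huv h.1 h.2
    have := T.two u v huv
    unfold TwoMin at this
    omega
  refine ⟨i, j, a, b, (A i j - C i j).toNat, hij, hia, hib, hja, hjb, hab, by omega, ?_, ?_⟩
  · intro u v huv
    rw [Int.toNat_of_nonneg (by omega)]
    refine eq_mul_EE_Mcr (D := fun u v => A u v - C u v) hij hia hib hja hjb hab
      (fun u v => ?_) ?_ ?_ ?_ ?_ ?_ ?_ ?_ u v huv
    · simp only [s1 u v, s3 u v]
    · rfl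
    all_goals first | omega | skip
    intro u v huv h1 h2 h3 h4
    have := out u v huv h1 h2 h3 h4
    omega
  · intro u v huv
    rw [Int.toNat_of_nonneg (by omega)]
    refine eq_mul_EE_Mcr (D := fun u v => B u v - C u v) hib hia hij hab.symm hjb.symm hja.symm
      (fun u v => ?_) ?_ ?_ ?_ ?_ ?_ ?_ ?_ u v huv
    · simp only [s2 u v, s3 u v]
    all_goals first | omega | skip
    intro u v huv h1 h2 h3 h4
    have := out u v huv h1 h4 h3 h2
    omega

/-! ### Cross-ratios -/

/-- The cross-ratio `(x_i - x_j)(x_a - x_b) / ((x_i - x_a)(x_j - x_b))`. -/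
noncomputable def cr (i j a b : V) : LL V := dd i j * dd a b / (dd i a * dd j b)

/-- Four pairwise distinct points. -/
def Dist4 (i j a b : V) : Prop := i ≠ j ∧ i ≠ a ∧ i ≠ b ∧ j ≠ a ∧ j ≠ b ∧ a ≠ b

lemma Rep_Mcr {i j a b : V} (h : Dist4 i j a b) : Rep (Mcr i j a b) = cr i j a b := by
  obtain ⟨h1, h2, h3, h4, h5, h6⟩ := h
  rw [Mcr, Rep_sub, Rep_sub, Rep_add, Rep_sg h1, Rep_sg h2, Rep_sg h5, Rep_sg h6, cr,
    div_div]

lemma cr_ne {i j a b : V} (h : Dist4 i j a b) : cr i j a b ≠ 0 := by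
  rw [← Rep_Mcr h]; exact Rep_ne _

lemma one_sub_cr {i j a b : V} (h : Dist4 i j a b) : 1 - cr i j a b = cr i b a j := by
  obtain ⟨h1, h2, h3, h4, h5, h6⟩ := h
  have e1 := dd_ne h2
  have e2 := dd_ne h5
  have e3 := dd_ne h5.symm
  unfold cr
  have e4 : dd b j = - dd j b := by simp [dd]
  rw [e4] at e3 ⊢
  field_simp
  unfold dd
  ring

lemma cr_inv {i j a b : V} : (cr i j a b)⁻¹ = cr i a j b := by
  unfold cr; rw [inv_div]

lemma cr_klein1 (i j a b : V) : cr i j a b = cr j i b a := by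
  unfold cr dd
  congr 1 <;> ring

lemma cr_klein2 (i j a b : V) : cr i j a b = cr a b i j := by
  unfold cr dd
  rw [← neg_sub (xx i) (xx a), ← neg_sub (xx j) (xx b)]
  congr 1 <;> ring

lemma spec_cr {F : Type*} [Field F] [Algebra ℚ F] (p : V → F) {i j a b : V} (h1 : p i ≠ p a)
    (h2 : p j ≠ p b) : Spec (evp p) (cr i j a b)
      ((p i - p j) * (p a - p b) / ((p i - p a) * (p j - p b))) :=
  ((spec_dd p i j).mul (spec_dd p a b)).div ((spec_dd p i a).mul (spec_dd p j b))
    (mul_ne_zero (sub_ne_zero.2 h1) (sub_ne_zero.2 h2))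

lemma degZero_Mcr {i j a b : V} (h : Dist4 i j a b) : DegZero (Mcr i j a b) := by
  obtain ⟨h1, h2, h3, h4, h5, h6⟩ := h
  intro u
  have key : ∀ i j : V, i ≠ j → ∑ v ∈ Finset.univ.erase u, (ed i j u v : ℤ) =
      (if u = i then 1 else 0) + (if u = j then 1 else 0) := by
    intro i j hij
    have : ∀ v, (ed i j u v : ℤ) = (if v = j then (if u = i then 1 else 0) else 0) +
        (if v = i then (if u = j then 1 else 0) else 0) := by
      intro v; unfold ed; grind
    simp only [this, Finset.sum_add_distrib, Finset.sum_ite_eq', Finset.mem_erase,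
      Finset.mem_univ, and_true]
    grind
  simp only [EE_Mcr i j a b u _ h1 h2 h5 h6, Finset.sum_add_distrib, Finset.sum_sub_distrib,
    key i j h1, key a b h6, key i a h2, key j b h5]
  ring

/-- A three-term relation between degree-zero products is a multiple of
`cr i j a b + cr i b a j = 1`. -/
theorem three_term {M N K : V → V → ℤ} (h : Rep M + Rep N = Rep K) (hM : DegZero M)
    (hN : DegZero N) (hK : DegZero K) :
    ∃ i j a b : V, Dist4 i j a b ∧ Rep M = Rep K * cr i j a b := by
  have T : Tri (EE M) (EE N) (EE K) :=
    { symA := fun u v => add_comm _ _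
      symB := fun u v => add_comm _ _
      symC := fun u v => add_comm _ _
      degA := hM
      degB := hN
      degC := hK
      two := fun i j hij => twoMin_EE h hij
      disj := fun i j a b h1 h2 h3 h4 h5 h6 n => twoMin_disjoint h h1 h2 h3 h4 h5 h6 n
      tri := fun i j a h1 h2 h3 n => twoMin_triangle h h1 h2 h3 n }
  have hK0 := Rep_ne K
  obtain ⟨i, j, a, b, m, hij, hia, hib, hja, hjb, hab, hm, e1, e2⟩ := T.classify (by
    intro hc
    -- all exponents equal would give `±1 ± 1 = 1`
    have h1 := Rep_eq_or_neg fun u v huv => (hc u v huv).1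
    have h2 := Rep_eq_or_neg fun u v huv => (hc u v huv).2
    have : (1 : LL V) + 1 ≠ 0 := by norm_num
    rcases h1 with h1 | h1 <;> rcases h2 with h2 | h2 <;> rw [h1, h2] at h
    · exact hK0 (by linear_combination h)
    · exact hK0 (by linear_combination -h)
    · exact hK0 (by linear_combination -h)
    · have h3 : (3 : LL V) * Rep K = 0 := by linear_combination -h
      simp [hK0] at h3)
  have d1 : Dist4 i j a b := ⟨hij, hia, hib, hja, hjb, hab⟩
  have d2 : Dist4 i b a j := ⟨hib, hia, hij, hab.symm, hjb.symm, hja.symm⟩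
  have f1 : Rep M = Rep K * cr i j a b ^ m ∨ Rep M = -(Rep K * cr i j a b ^ m) := by
    rw [← Rep_Mcr d1, ← Rep_nsmul, ← Rep_add]
    refine Rep_eq_or_neg fun u v huv => ?_
    have := e1 u v huv
    simp only [EE, Pi.add_apply, Pi.smul_apply] at this ⊢
    rw [nsmul_eq_mul, nsmul_eq_mul]
    linear_combination this
  have f2 : Rep N = Rep K * cr i b a j ^ m ∨ Rep N = -(Rep K * cr i b a j ^ m) := by
    rw [← Rep_Mcr d2, ← Rep_nsmul, ← Rep_add]
    refine Rep_eq_or_neg fun u v huv => ?_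
    have := e2 u v huv
    simp only [EE, Pi.add_apply, Pi.smul_apply] at this ⊢
    rw [nsmul_eq_mul, nsmul_eq_mul]
    linear_combination this
  -- specialize so that `cr i j a b = 2` and `cr i b a j = -1`
  let p : V → ℚ := fun v => if v = i then 0 else if v = j then 4 else if v = a then 6 else 3
  have pi : p i = 0 := by simp [p]
  have pj : p j = 4 := by simp [p, hij.symm]
  have pa : p a = 6 := by simp [p, hia.symm, hja.symm]
  have pb : p b = 3 := by simp [p, hib.symm, hjb.symm, hab.symm]
  have s1 : Spec (evp p) (cr i j a b) 2 := by
    have := spec_cr p (i := i) (j := j) (a := a) (b := b) (by rw [pi, pa]; norm_num)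
      (by rw [pj, pb]; norm_num)
    rw [pi, pj, pa, pb] at this
    have e : ((0 : ℚ) - 4) * (6 - 3) / ((0 - 6) * (4 - 3)) = 2 := by norm_num
    rwa [e] at this
  have s2 : Spec (evp p) (cr i b a j) (-1) := by
    have e : (1 : ℚ) - 2 = -1 := by norm_num
    rw [← one_sub_cr d1, ← e]
    exact Spec.one.sub s1
  have t1 := s1.pow m
  have t2 := s2.pow m
  have hpow : m ≠ 1 → (4 : ℚ) ≤ 2 ^ m := by
    intro h1
    have : (2 : ℚ) ^ 2 ≤ 2 ^ m := pow_le_pow_right₀ (by norm_num) (by omega)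
    linarith
  have hsg : (-1 : ℚ) ^ m = 1 ∨ (-1 : ℚ) ^ m = -1 := neg_one_pow_eq_or ℚ m
  have hlow : (2 : ℚ) ≤ 2 ^ m := by
    have : (2 : ℚ) ^ 1 ≤ 2 ^ m := pow_le_pow_right₀ (by norm_num) hm
    linarith
  refine ⟨i, j, a, b, d1, ?_⟩
  rcases f1 with f1 | f1
  · suffices m = 1 by rw [f1, this, pow_one]
    by_contra hm1
    have := hpow hm1
    rcases f2 with f2 | f2 <;> rw [f1, f2] at h
    · have h' : cr i j a b ^ m + cr i b a j ^ m = 1 := by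
        apply mul_left_cancel₀ hK0; linear_combination h
      have := (h' ▸ t1.add t2).unique Spec.one
      rcases hsg with e | e <;> rw [e] at this <;> linarith
    · have h' : cr i j a b ^ m - cr i b a j ^ m = 1 := by
        apply mul_left_cancel₀ hK0; linear_combination h
      have := (h' ▸ t1.sub t2).unique Spec.one
      rcases hsg with e | e <;> rw [e] at this <;> linarith
  · exfalso
    rcases f2 with f2 | f2 <;> rw [f1, f2] at h
    · have h' : -cr i j a b ^ m + cr i b a j ^ m = 1 := by
        apply mul_left_cancel₀ hK0; linear_combination h
      have := (h' ▸ t1.neg.add t2).unique Spec.one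
      rcases hsg with e | e <;> rw [e] at this <;> linarith
    · have h' : -cr i j a b ^ m - cr i b a j ^ m = 1 := by
        apply mul_left_cancel₀ hK0; linear_combination h
      have := (h' ▸ t1.neg.sub t2).unique Spec.one
      rcases hsg with e | e <;> rw [e] at this <;> linarith

/-- The multiplicative monoid (in fact group) generated by the cross-ratios. -/
noncomputable def Bm (V : Type*) [Fintype V] [DecidableEq V] : Submonoid (LL V) :=
  Submonoid.closure {y | ∃ i j a b : V, Dist4 i j a b ∧ y = cr i j a b}

lemma cr_mem {i j a b : V} (h : Dist4 i j a b) : cr i j a b ∈ Bm V :=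
  Submonoid.subset_closure ⟨i, j, a, b, h, rfl⟩

lemma exists_rep {y : LL V} (hy : y ∈ Bm V) : ∃ M, DegZero M ∧ y = Rep M := by
  induction hy using Submonoid.closure_induction with
  | mem x hx =>
    obtain ⟨i, j, a, b, h, rfl⟩ := hx
    exact ⟨_, degZero_Mcr h, (Rep_Mcr h).symm⟩
  | one => exact ⟨0, fun u => by simp [EE], Rep_zero.symm⟩
  | mul x y _ _ hx hy =>
    obtain ⟨M, hM, rfl⟩ := hx
    obtain ⟨N, hN, rfl⟩ := hy
    refine ⟨M + N, fun u => ?_, (Rep_add M N).symm⟩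
    have h1 := hM u
    have h2 := hN u
    calc _ = ∑ v ∈ Finset.univ.erase u, (EE M u v + EE N u v) := by
          refine Finset.sum_congr rfl fun v _ => ?_
          simp only [EE, Pi.add_apply]; ring
      _ = 0 := by rw [Finset.sum_add_distrib, h1, h2, add_zero]

lemma Bm_ne {y : LL V} (hy : y ∈ Bm V) : y ≠ 0 := by
  obtain ⟨M, _, rfl⟩ := exists_rep hy
  exact Rep_ne M

/-- The fundamental elements are the cross-ratios. -/
theorem eq_cr_of_one_sub_mem {y : LL V} (hy : y ∈ Bm V) (hy' : 1 - y ∈ Bm V) :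
    ∃ i j a b : V, Dist4 i j a b ∧ y = cr i j a b := by
  obtain ⟨M, hM, hyM⟩ := exists_rep hy
  obtain ⟨N, hN, hyN⟩ := exists_rep hy'
  obtain ⟨i, j, a, b, h, e⟩ := three_term (M := M) (N := N) (K := 0)
    (by rw [← hyM, ← hyN, Rep_zero]; ring) hM hN (fun u => by simp [EE])
  exact ⟨i, j, a, b, h, by rw [hyM, e, Rep_zero, one_mul]⟩

/-! ### Pairs of cross-ratios with fundamental quotients -/

/-- The four permutations of `Fin 4` forming the Klein group; cross-ratios are invariant under
permuting their arguments by it. -/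
def kl (t s : Fin 4) : Fin 4 :=
  (![![0, 1, 2, 3], ![1, 0, 3, 2], ![2, 3, 0, 1], ![3, 2, 1, 0]] : Fin 4 → Fin 4 → Fin 4) t s

/-- The cross-ratio of a quadruple of points. -/
noncomputable def crq (q : Fin 4 → V) : LL V := cr (q 0) (q 1) (q 2) (q 3)

lemma dist4_of_injective {q : Fin 4 → V} (hq : Function.Injective q) :
    Dist4 (q 0) (q 1) (q 2) (q 3) := by
  refine ⟨?_, ?_, ?_, ?_, ?_, ?_⟩ <;> exact hq.ne (by decide)

lemma Dist4.injective {i j a b : V} (h : Dist4 i j a b) :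
    Function.Injective ![i, j, a, b] := by
  obtain ⟨h1, h2, h3, h4, h5, h6⟩ := h
  intro s t hst
  fin_cases s <;> fin_cases t <;> simp_all [eq_comm]

lemma crq_kl (q : Fin 4 → V) (t : Fin 4) : crq (fun s => q (kl t s)) = crq q := by
  fin_cases t
  · rfl
  · exact (cr_klein1 _ _ _ _).symm
  · exact (cr_klein2 _ _ _ _).symm
  · exact ((cr_klein1 _ _ _ _).trans (cr_klein2 _ _ _ _)).symm

lemma kl_injective (t : Fin 4) : Function.Injective (kl t) := by
  revert t; decide

/-- Pairing of an exponent matrix with the exponents of a cross-ratio. -/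
def ip (M : V → V → ℤ) (i j a b : V) : ℤ := EE M i j + EE M a b - EE M i a - EE M j b

lemma sum_mul_EE_Mcr {i j a b : V} (h : Dist4 i j a b) (M : V → V → ℤ) :
    ∑ u, ∑ v, M u v * EE (Mcr i j a b) u v = ip M i j a b := by
  obtain ⟨h1, h2, h3, h4, h5, h6⟩ := h
  simp only [EE_Mcr i j a b _ _ h1 h2 h5 h6, mul_sub, mul_add, Finset.sum_add_distrib,
    Finset.sum_sub_distrib, sum_ed h1, sum_ed h2, sum_ed h5, sum_ed h6, ip]

lemma norm_Mcr {i j a b : V} (h : Dist4 i j a b) :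
    ∑ u, ∑ v, EE (Mcr i j a b) u v * EE (Mcr i j a b) u v = 8 := by
  rw [sum_mul_EE_Mcr h]
  obtain ⟨h1, h2, h3, h4, h5, h6⟩ := h
  have e : ∀ M : V → V → ℤ, ip (EE M) i j a b = 2 * ip M i j a b := by
    intro M; simp only [ip, EE]; ring
  rw [e, ip]
  simp only [EE_Mcr i j a b _ _ h1 h2 h5 h6, ed]
  simp [h1, h2, h3, h4, h5, h6, h1.symm, h2.symm, h3.symm, h4.symm, h5.symm, h6.symm]

/-- If the quotient of two cross-ratios is a cross-ratio, then their exponent vectors, of norm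
`4`, have scalar product `2`. -/
lemma ip_eq_two {i j a b i' j' a' b' i'' j'' a'' b'' : V} (h : Dist4 i j a b)
    (h' : Dist4 i' j' a' b') (h'' : Dist4 i'' j'' a'' b'')
    (e : cr i j a b = cr i' j' a' b' * cr i'' j'' a'' b'') :
    ip (Mcr i' j' a' b') i j a b = 2 := by
  rw [← Rep_Mcr h, ← Rep_Mcr h', ← Rep_Mcr h'', ← Rep_add] at e
  have e1 : ∀ u v, EE (Mcr i'' j'' a'' b'') u v =
      EE (Mcr i j a b) u v - EE (Mcr i' j' a' b') u v := by
    intro u v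
    by_cases huv : u = v
    · subst huv
      have : ∀ {i j a b : V}, Dist4 i j a b → EE (Mcr i j a b) u u = 0 := by
        rintro i j a b ⟨h1, h2, h3, h4, h5, h6⟩
        rw [EE_Mcr i j a b _ _ h1 h2 h5 h6]
        unfold ed
        grind
      rw [this h, this h', this h'', sub_zero]
    · have := EE_eq_of_Rep_eq e huv
      rw [this]
      simp only [EE, Pi.add_apply]
      ring
  have n := norm_Mcr h''
  have n1 := norm_Mcr h
  have n2 := norm_Mcr h'
  have n3 := sum_mul_EE_Mcr h (EE (Mcr i' j' a' b'))
  have e2 : ip (EE (Mcr i' j' a' b')) i j a b = 2 * ip (Mcr i' j' a' b') i j a b := by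
    simp only [ip, EE]; ring
  have n4 : ∑ u, ∑ v, EE (Mcr i'' j'' a'' b'') u v * EE (Mcr i'' j'' a'' b'') u v =
      ∑ u, ∑ v, EE (Mcr i j a b) u v * EE (Mcr i j a b) u v +
      ∑ u, ∑ v, EE (Mcr i' j' a' b') u v * EE (Mcr i' j' a' b') u v -
      2 * ∑ u, ∑ v, EE (Mcr i' j' a' b') u v * EE (Mcr i j a b) u v := by
    rw [Finset.mul_sum, ← Finset.sum_add_distrib, ← Finset.sum_sub_distrib]
    refine Finset.sum_congr rfl fun u _ => ?_
    rw [Finset.mul_sum, ← Finset.sum_add_distrib, ← Finset.sum_sub_distrib]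
    refine Finset.sum_congr rfl fun v _ => ?_
    rw [e1]; ring
  rw [n, n1, n2, n3, e2] at n4
  omega

/-- Indicator of equality of unordered pairs of codes, see `code_cases`. -/
def edc (x y s t : Fin 5) : ℤ := if (s = x ∧ t = y) ∨ (s = y ∧ t = x) then 1 else 0

/-- Pairing of the cross-ratio of `(x, y, z, w)` with that of `(s, t, m, n)`. -/
def ipc (x y z w s t m n : Fin 5) : ℤ :=
  let G : Fin 5 → Fin 5 → ℤ := fun u v => edc x y u v + edc z w u v - edc x z u v - edc y w u v
  G s t + G m n - G s m - G t n

set_option maxRecDepth 100000 in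
set_option maxHeartbeats 4000000 in
/-- The finite case analysis: a quadruple is coded by the position (`0`, …, `3`) of its entries
in a fixed quadruple, `4` standing for points outside it. -/
lemma code_cases : ∀ x y z w : Fin 5, (x = y → x = 4) → (x = z → x = 4) → (x = w → x = 4) →
    (y = z → y = 4) → (y = w → y = 4) → (z = w → z = 4) →
    ipc x y z w 0 1 2 3 = 2 → ipc x w z y 0 3 2 1 = 2 →
    (∃ t r : Fin 4, (∀ s, s ≠ r → ![x, y, z, w] (kl t s) = s.castSucc) ∧
      ![x, y, z, w] (kl t r) = 4) ∨
    ∃ t : Fin 4, ∀ s, ![x, y, z, w] (kl t s) = ![0, 3, 2, 1] s := by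
  decide +kernel

/-- `f / (1 - f)` is not a cross-ratio when `f` is one: it takes the value `1` at a point with
distinct coordinates where `f = 1 / 2`. -/
lemma not_cr_ratio {i j a b i' j' a' b' : V} (h : Dist4 i j a b) (h' : Dist4 i' j' a' b') :
    cr i j a b ≠ (1 - cr i j a b) * cr i' j' a' b' := by
  intro e
  obtain ⟨h1, h2, h3, h4, h5, h6⟩ := id h
  let p : V → ℚ := fun v => if v = i then 0 else if v = j then 6 else if v = a then 4 else
    if v = b then 3 else 100 + (Fintype.equivFin V v : ℕ)
  have hp : Function.Injective p := by
    intro u v huv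
    have hu : (0 : ℚ) ≤ (Fintype.equivFin V u : ℕ) := by positivity
    have hv : (0 : ℚ) ≤ (Fintype.equivFin V v : ℕ) := by positivity
    have huv' : (100 + (Fintype.equivFin V u : ℕ) : ℚ) = 100 + (Fintype.equivFin V v : ℕ) →
        u = v := by
      intro h
      simpa [Fin.val_inj] using h
    simp only [p] at huv
    split_ifs at huv <;> first | (subst_vars; rfl) | (exfalso; linarith) | exact huv' huv
  have pi : p i = 0 := by simp [p]
  have pj : p j = 6 := by simp [p, h1.symm]
  have pa : p a = 4 := by simp [p, h2.symm, h4.symm]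
  have pb : p b = 3 := by simp [p, h3.symm, h5.symm, h6.symm]
  have s1 : Spec (evp p) (cr i j a b) (1 / 2) := by
    have := spec_cr p (i := i) (j := j) (a := a) (b := b) (hp.ne h2) (hp.ne h5)
    rw [pi, pj, pa, pb] at this
    have e : ((0 : ℚ) - 6) * (4 - 3) / ((0 - 4) * (6 - 3)) = 1 / 2 := by norm_num
    rwa [e] at this
  obtain ⟨g1, g2, g3, g4, g5, g6⟩ := id h'
  have s2 := spec_cr p (i := i') (j := j') (a := a') (b := b') (hp.ne g2) (hp.ne g5)
  have s3 := spec_cr p (i := i') (j := b') (a := a') (b := j') (hp.ne g2) (hp.ne g5.symm)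
  have s4 := ((Spec.one (ev := evp p)).sub s1).mul s2
  rw [← e] at s4
  have e5 := s1.unique s4
  rw [← one_sub_cr h'] at s3
  have e6 := s3.unique ((Spec.one (ev := evp p)).sub s2)
  have n : (p i' - p b') * (p a' - p j') / ((p i' - p a') * (p b' - p j')) ≠ 0 :=
    div_ne_zero (mul_ne_zero (sub_ne_zero.2 (hp.ne g3)) (sub_ne_zero.2 (hp.ne g4.symm)))
      (mul_ne_zero (sub_ne_zero.2 (hp.ne g2)) (sub_ne_zero.2 (hp.ne g5.symm)))
  apply n
  rw [e6]
  linarith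

/-- If `f, g` are cross-ratios and so are `f / g` and `(1 - f) / (1 - g)`, then up to Klein
symmetry their quadruples differ in exactly one entry. -/
theorem pair_cr {q q' : Fin 4 → V} (hq : Function.Injective q) (hq' : Function.Injective q')
    {i j a b i' j' a' b' : V} (h : Dist4 i j a b) (h' : Dist4 i' j' a' b')
    (e : crq q = crq q' * cr i j a b) (e' : 1 - crq q = (1 - crq q') * cr i' j' a' b') :
    ∃ t r : Fin 4, (∀ s, s ≠ r → q' (kl t s) = q s) ∧ ∀ s, q' (kl t r) ≠ q s := by
  have d := dist4_of_injective hq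
  have d' := dist4_of_injective hq'
  have D : ∀ {i j a b : V}, Dist4 i j a b → Dist4 i b a j := by
    rintro i j a b ⟨h1, h2, h3, h4, h5, h6⟩
    exact ⟨h3, h2, h1, h6.symm, h5.symm, h4.symm⟩
  have I1 := ip_eq_two d d' h e
  have e'' := e'
  rw [crq, crq, one_sub_cr d, one_sub_cr d'] at e''
  have I2 := ip_eq_two (D d) (D d') h' e''
  let code : V → Fin 5 := fun v => if v = q 0 then 0 else if v = q 1 then 1 else
    if v = q 2 then 2 else if v = q 3 then 3 else 4
  obtain ⟨h1, h2, h3, h4, h5, h6⟩ := id d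
  have c0 : ∀ v, q 0 = v ↔ 0 = code v := by intro v; simp only [code]; grind
  have c1 : ∀ v, q 1 = v ↔ 1 = code v := by intro v; simp only [code]; grind
  have c2 : ∀ v, q 2 = v ↔ 2 = code v := by intro v; simp only [code]; grind
  have c3 : ∀ v, q 3 = v ↔ 3 = code v := by intro v; simp only [code]; grind
  have cs : ∀ v s, code v = Fin.castSucc s ↔ v = q s := by
    intro v s
    fin_cases s
    · exact eq_comm.trans ((c0 v).symm.trans eq_comm)
    · exact eq_comm.trans ((c1 v).symm.trans eq_comm)
    · exact eq_comm.trans ((c2 v).symm.trans eq_comm)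
    · exact eq_comm.trans ((c3 v).symm.trans eq_comm)
  have ci : ∀ u v, u ≠ v → code u = code v → code u = 4 := by
    intro u v huv; simp only [code]; grind
  obtain ⟨g1, g2, g3, g4, g5, g6⟩ := id d'
  have J1 : ipc (code (q' 0)) (code (q' 1)) (code (q' 2)) (code (q' 3)) 0 1 2 3 = 2 := by
    rw [← I1]
    simp only [ip, ipc, EE_Mcr _ _ _ _ _ _ g1 g2 g5 g6, ed, edc, c0, c1, c2, c3,
      Nat.cast_ite, Nat.cast_one, Nat.cast_zero]
  have J2 : ipc (code (q' 0)) (code (q' 3)) (code (q' 2)) (code (q' 1)) 0 3 2 1 = 2 := by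
    rw [← I2]
    simp only [ip, ipc, EE_Mcr _ _ _ _ _ _ g3 g2 g5.symm g4.symm, ed, edc, c0, c1, c2, c3,
      Nat.cast_ite, Nat.cast_one, Nat.cast_zero]
  have cc : ∀ s, ![code (q' 0), code (q' 1), code (q' 2), code (q' 3)] s = code (q' s) := by
    intro s; fin_cases s <;> rfl
  have key := code_cases _ _ _ _ (ci _ _ g1) (ci _ _ g2) (ci _ _ g3) (ci _ _ g4) (ci _ _ g5)
    (ci _ _ g6) J1 J2
  simp only [cc] at key
  rcases key with ⟨t, r, k1, k2⟩ | ⟨t, k⟩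
  · refine ⟨t, r, fun s hs => (cs _ _).1 (k1 s hs), fun s hs => ?_⟩
    rw [(cs _ _).2 hs] at k2
    have : ∀ s : Fin 4, s.castSucc ≠ 4 := by decide
    exact this s k2
  · exfalso
    have k0 : q' (kl t 0) = q 0 := (cs _ 0).1 (k 0)
    have k1 : q' (kl t 1) = q 3 := (cs _ 3).1 (k 1)
    have k2 : q' (kl t 2) = q 2 := (cs _ 2).1 (k 2)
    have k3 : q' (kl t 3) = q 1 := (cs _ 1).1 (k 3)
    have : crq q' = 1 - crq q := by
      rw [← crq_kl q' t, crq, k0, k1, k2, k3, crq, one_sub_cr d]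
    rw [this] at e
    exact not_cr_ratio d h e

/-- A family of cross-ratios any two of which satisfy the hypotheses of `pair_cr` has the form
`cr (z v) j a b` with common `j`, `a`, `b`. -/
theorem glue {k : ℕ} (hk : 1 ≤ k) (f : Fin k → LL V)
    (hf : ∀ v, ∃ i j a b : V, Dist4 i j a b ∧ f v = cr i j a b)
    (hr : ∀ v w, v ≠ w → ∃ i j a b : V, Dist4 i j a b ∧ f v = f w * cr i j a b)
    (hs : ∀ v w, v ≠ w → ∃ i j a b : V, Dist4 i j a b ∧ 1 - f v = (1 - f w) * cr i j a b) :
    ∃ (j a b : V) (z : Fin k → V), Function.Injective z ∧ (∀ v, Dist4 (z v) j a b) ∧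
      ∀ v, f v = cr (z v) j a b := by
  have hf' : ∀ v, ∃ q : Fin 4 → V, Function.Injective q ∧ f v = crq q := by
    intro v
    obtain ⟨i, j, a, b, h, e⟩ := hf v
    exact ⟨_, h.injective, e⟩
  choose q hq e using hf'
  have P : ∀ {p p' : Fin 4 → V} (v w : Fin k), v ≠ w → Function.Injective p →
      Function.Injective p' → f v = crq p → f w = crq p' →
      ∃ t r : Fin 4, (∀ s, s ≠ r → p' (kl t s) = p s) ∧ ∀ s, p' (kl t r) ≠ p s := by
    intro p p' v w hvw hp hp' ev ew
    obtain ⟨i, j, a, b, h, e1⟩ := hr v w hvw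
    obtain ⟨i', j', a', b', h', e2⟩ := hs v w hvw
    rw [ev, ew] at e1 e2
    exact pair_cr hp hp' h h' e1 e2
  let o : Fin k := ⟨0, hk⟩
  -- normalize all quadruples against that of the first index
  have N : ∀ w, ∃ p : Fin 4 → V, Function.Injective p ∧ f w = crq p ∧
      ∃ r : Fin 4, (∀ s, s ≠ r → p s = q o s) ∧ (w ≠ o → ∀ s, p r ≠ q o s) ∧
        (w = o → p r = q o r) := by
    intro w
    by_cases hw : w = o
    · exact ⟨q o, hq o, by rw [hw, e], 0, fun _ _ => rfl, fun h => absurd hw h, fun _ => rfl⟩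
    · obtain ⟨t, r, h1, h2⟩ := P o w (Ne.symm hw) (hq o) (hq w) (e o) (e w)
      exact ⟨fun s => q w (kl t s), (hq w).comp (kl_injective t), by rw [crq_kl, e], r, h1,
        fun _ => h2, fun h => absurd h hw⟩
  choose p hp ep r hr1 hr2 hr3 using N
  have hpo : p o = q o := by
    funext s
    by_cases h : s = r o
    · rw [h]; exact hr3 o rfl
    · exact hr1 o s h
  have R : ∀ v w, v ≠ o → w ≠ o → v ≠ w → r v = r w ∧ p v (r v) ≠ p w (r w) := by
    intro v w hv hw hvw
    obtain ⟨t, m, h1, h2⟩ := P v w hvw (hp v) (hp w) (ep v) (ep w)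
    obtain ⟨c, c1, c2, c3⟩ := (by decide : ∀ x y z : Fin 4, ∃ c, c ≠ x ∧ c ≠ y ∧ c ≠ z) (r v) (r w) m
    -- a common entry, in the same place, forces the Klein symmetry to be trivial
    have ht : kl t c = c := by
      have h3 := h1 c c3
      rw [hr1 v c c1] at h3
      have h4 : kl t c ≠ r w := fun h => hr2 w hw c (h ▸ h3)
      rw [hr1 w _ h4] at h3
      exact hq o h3
    have ht' : ∀ s, kl t s = s := (by decide : ∀ t c, kl t c = c → ∀ s, kl t s = s) t c ht
    simp only [ht'] at h1 h2
    have m1 : m = r v := by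
      by_contra hm
      have h3 := h1 _ (Ne.symm hm)
      by_cases hvw' : r v = r w
      · have h4 := h2 m
        rw [hr1 v m hm, hr1 w m (hvw' ▸ hm)] at h4
        exact h4 rfl
      · rw [hr1 w _ hvw'] at h3
        exact hr2 v hv _ h3.symm
    have m2 : m = r w := by
      by_contra hm
      have h3 := h1 _ (Ne.symm hm)
      rw [hr1 v _ (m1 ▸ Ne.symm hm)] at h3
      exact hr2 w hw _ h3
    refine ⟨m1.symm.trans m2, ?_⟩
    rw [← m1, ← m2]
    exact (h2 m).symm
  -- the common position
  obtain ⟨m, hm⟩ : ∃ m, ∀ w, w ≠ o → r w = m := by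
    by_cases h : ∃ w, w ≠ o
    · obtain ⟨w, hw⟩ := h
      refine ⟨r w, fun v hv => ?_⟩
      by_cases hvw : v = w
      · rw [hvw]
      · exact (R v w hv hw hvw).1
    · exact ⟨0, fun w hw => absurd ⟨w, hw⟩ h⟩
  obtain ⟨t, ht⟩ : ∃ t, kl t 0 = m := (by decide : ∀ m, ∃ t, kl t 0 = m) m
  have hkl : ∀ s, s ≠ 0 → kl t s ≠ m := by
    intro s hs h; rw [← ht] at h; exact hs (kl_injective t h)
  have hagree : ∀ w s, s ≠ 0 → p w (kl t s) = q o (kl t s) := by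
    intro w s hs
    by_cases hw : w = o
    · rw [hw, hpo]
    · exact hr1 w _ (by rw [hm w hw]; exact hkl s hs)
  refine ⟨q o (kl t 1), q o (kl t 2), q o (kl t 3), fun w => p w (kl t 0), ?_, ?_, ?_⟩
  · intro v w hvw
    by_contra hne
    simp only [ht] at hvw
    by_cases hv : v = o
    · have hw : w ≠ o := fun h => hne (hv.trans h.symm)
      rw [hv, hpo, ← hm w hw] at hvw
      exact hr2 w hw _ hvw.symm
    · by_cases hw : w = o
      · rw [hw, hpo, ← hm v hv] at hvw
        exact hr2 v hv _ hvw
      · have := (R v w hv hw hne).2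
        rw [hm v hv, hm w hw] at this
        exact this hvw
  · intro w
    have := dist4_of_injective ((hp w).comp (kl_injective t))
    simp only [Function.comp] at this
    rwa [hagree w 1 (by decide), hagree w 2 (by decide), hagree w 3 (by decide)] at this
  · intro w
    show f w = _
    rw [ep, ← crq_kl _ t, crq, hagree w 1 (by decide), hagree w 2 (by decide),
      hagree w 3 (by decide)]

/-! ### Permuting the points -/

/-- The automorphism of `ℚ(x_v : v ∈ V)` permuting the indeterminates. -/
noncomputable def act (π : Equiv.Perm V) : LL V ≃+* LL V :=
  IsFractionRing.ringEquivOfRingEquiv (renameEquiv ℚ π).toRingEquiv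

lemma act_xx (π : Equiv.Perm V) (v : V) : act π (xx v) = xx (π v) := by
  simp [act, xx]

lemma act_dd (π : Equiv.Perm V) (u v : V) : act π (dd u v) = dd (π u) (π v) := by
  simp only [dd, map_sub, act_xx]

lemma act_cr (π : Equiv.Perm V) (i j a b : V) :
    act π (cr i j a b) = cr (π i) (π j) (π a) (π b) := by
  simp only [cr, map_div₀, map_mul, act_dd]

lemma Dist4.map {i j a b : V} (h : Dist4 i j a b) (π : Equiv.Perm V) :
    Dist4 (π i) (π j) (π a) (π b) := by
  obtain ⟨h1, h2, h3, h4, h5, h6⟩ := h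
  exact ⟨π.injective.ne h1, π.injective.ne h2, π.injective.ne h3, π.injective.ne h4,
    π.injective.ne h5, π.injective.ne h6⟩

lemma act_mem (π : Equiv.Perm V) {y : LL V} (hy : y ∈ Bm V) : act π y ∈ Bm V := by
  induction hy using Submonoid.closure_induction with
  | mem x hx =>
    obtain ⟨i, j, a, b, h, rfl⟩ := hx
    rw [act_cr]
    exact cr_mem (h.map π)
  | one => rw [map_one]; exact one_mem _
  | mul x y _ _ hx hy => rw [map_mul]; exact mul_mem hx hy

lemma act_mul_of_mem (π ρ : Equiv.Perm V) {y : LL V} (hy : y ∈ Bm V) :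
    act (π * ρ) y = act π (act ρ y) := by
  induction hy using Submonoid.closure_induction with
  | mem x hx =>
    obtain ⟨i, j, a, b, h, rfl⟩ := hx
    simp only [act_cr, Equiv.Perm.mul_apply]
  | one => simp only [map_one]
  | mul x y _ _ hx hy => simp only [map_mul, hx, hy]

lemma act_one_of_mem {y : LL V} (hy : y ∈ Bm V) : act 1 y = y := by
  induction hy using Submonoid.closure_induction with
  | mem x hx =>
    obtain ⟨i, j, a, b, h, rfl⟩ := hx
    simp only [act_cr, Equiv.Perm.one_apply]
  | one => simp only [map_one]
  | mul x y _ _ hx hy => simp only [map_mul, hx, hy]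

lemma Bm_inv {y : LL V} (hy : y ∈ Bm V) : y⁻¹ ∈ Bm V := by
  induction hy using Submonoid.closure_induction with
  | mem x hx =>
    obtain ⟨i, j, a, b, ⟨h1, h2, h3, h4, h5, h6⟩, rfl⟩ := hx
    rw [cr_inv]
    exact cr_mem ⟨h2, h1, h3, h4.symm, h6, h5⟩
  | one => rw [inv_one]; exact one_mem _
  | mul x y _ _ hx hy => rw [mul_inv]; exact mul_mem hx hy

lemma neg_one_mem {i j a b : V} (h : Dist4 i j a b) : (-1 : LL V) ∈ Bm V := by
  obtain ⟨h1, h2, h3, h4, h5, h6⟩ := h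
  have e : cr i j a b * cr i b j a * cr i a b j = -1 := by
    have e1 := dd_ne h1
    have e2 := dd_ne h2
    have e3 := dd_ne h3
    have e4 := dd_ne h4
    have e5 := dd_ne h5
    have e6 := dd_ne h6
    have s : ∀ u v : V, dd u v = -dd v u := fun u v => by simp [dd]
    unfold cr
    rw [s b a, s b j, s a j]
    field_simp
  rw [← e]
  exact mul_mem (mul_mem (cr_mem ⟨h1, h2, h3, h4, h5, h6⟩)
    (cr_mem ⟨h3, h1, h2, h5.symm, h6.symm, h4⟩)) (cr_mem ⟨h2, h3, h1, h6, h4.symm, h5.symm⟩)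

/-- With at least five points, only the identity fixes all cross-ratios. -/
lemma eq_one_of_five (hV : 5 ≤ Fintype.card V) (π : Equiv.Perm V)
    (h : ∀ y ∈ Bm V, act π y = y) : π = 1 := by
  by_contra hne
  obtain ⟨v, hv⟩ : ∃ v, π v ≠ v := by
    by_contra hc
    push Not at hc
    exact hne (Equiv.ext hc)
  have hc : 2 < (Finset.univ \ {v, π v} : Finset V).card := by
    have h1 := Finset.le_card_sdiff ({v, π v} : Finset V) Finset.univ
    have h2 : ({v, π v} : Finset V).card ≤ 2 := Finset.card_le_two
    rw [Finset.card_univ] at h1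
    omega
  obtain ⟨j, a, b, hj, ha, hb, h4, h5, h6⟩ := Finset.two_lt_card_iff.1 hc
  simp only [Finset.mem_sdiff, Finset.mem_univ, true_and, Finset.mem_insert,
    Finset.mem_singleton, not_or] at hj ha hb
  have d : Dist4 v j a b := ⟨Ne.symm hj.1, Ne.symm ha.1, Ne.symm hb.1, h4, h5, h6⟩
  have e := h _ (cr_mem d)
  have d' := d.map π
  rw [act_cr, ← Rep_Mcr d, ← Rep_Mcr d'] at e
  have e' := EE_eq_of_Rep_eq e d'.1
  obtain ⟨g1, g2, g3, g4, g5, g6⟩ := d'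
  obtain ⟨k1, k2, k3, k4, k5, k6⟩ := d
  rw [EE_Mcr _ _ _ _ _ _ g1 g2 g5 g6, EE_Mcr _ _ _ _ _ _ k1 k2 k5 k6] at e'
  unfold ed at e'
  grind

/-- A permutation fixing one of four points and all cross-ratios is the identity. -/
lemma fix_of_fix {π : Equiv.Perm V} (h : ∀ y ∈ Bm V, act π y = y) {v j a b : V}
    (d : Dist4 v j a b) (hV : ∀ u, u = v ∨ u = j ∨ u = a ∨ u = b) (ha : π a = a) : π b = b := by
  have e := h _ (cr_mem d)
  have d' := d.map π
  rw [act_cr, ← Rep_Mcr d, ← Rep_Mcr d'] at e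
  obtain ⟨g1, g2, g3, g4, g5, g6⟩ := d'
  have e' := EE_eq_of_Rep_eq e g6
  obtain ⟨k1, k2, k3, k4, k5, k6⟩ := d
  rw [EE_Mcr _ _ _ _ _ _ g1 g2 g5 g6, EE_Mcr _ _ _ _ _ _ k1 k2 k5 k6] at e'
  have := hV (π b)
  unfold ed at e'
  grind

end Points

/-! ### The embedding of `ℚ(α₁, …, α_k)` -/

/-- Points: the `α_i`, and `0`, `1`, `∞`. -/
abbrev PV (k : ℕ) := Fin k ⊕ Fin 3

/-- The point `0`. -/
abbrev p0 {k : ℕ} : PV k := Sum.inr 0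
/-- The point `1`. -/
abbrev p1 {k : ℕ} : PV k := Sum.inr 1
/-- The point `∞`. -/
abbrev pI {k : ℕ} : PV k := Sum.inr 2

/-- The indeterminate `α_i`. -/
noncomputable def al {k : ℕ} (i : Fin k) : RatFuncField k :=
  algebraMap (MvPolynomial (Fin k) ℚ) (RatFuncField k) (X i)

/-- The finite points as elements of `ℚ(α₁, …, α_k)`; the value at `∞` is junk. -/
noncomputable def pt {k : ℕ} : PV k → RatFuncField k :=
  Sum.elim al ![0, 1, 0]

/-- The polynomial part of `emb`: `α_i` is sent to the cross-ratio of `α_i, 0, ∞, 1`. -/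
noncomputable def embP (k : ℕ) : MvPolynomial (Fin k) ℚ →+* LL (PV k) :=
  (aeval fun i : Fin k => cr (Sum.inl i : PV k) p0 pI p1).toRingHom

lemma al_ne {k : ℕ} (i : Fin k) (c : ℚ) :
    al i ≠ algebraMap (MvPolynomial (Fin k) ℚ) (RatFuncField k) (C c) := by
  intro h
  have h1 := IsFractionRing.injective _ _ h
  have h2 := congrArg (eval fun _ => c + 1) h1
  simp at h2

lemma embP_injective (k : ℕ) : Function.Injective (embP k) := by
  -- send `x_∞ ↦ 2` and `x_i ↦ 2 α_i / (α_i + 1)`, so that the cross-ratio becomes `α_i`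
  let p : PV k → RatFuncField k :=
    Sum.elim (fun i => 2 * al i / (al i + 1)) ![0, 1, 2]
  have hal : ∀ i : Fin k, al i + 1 ≠ 0 := by
    intro i h
    apply al_ne i (-1)
    rw [map_neg, map_neg, map_one, map_one]
    linear_combination h
  have h1 : ∀ i : Fin k, Spec (evp p) (cr (Sum.inl i : PV k) p0 pI p1) (al i) := by
    intro i
    have h2 : (2 : RatFuncField k) ≠ 0 := two_ne_zero
    have hi := hal i
    have e1 : p (Sum.inl i) = 2 * al i / (al i + 1) := rfl
    have e2 : p p0 = 0 := rfl
    have e3 : p p1 = 1 := rfl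
    have e4 : p pI = 2 := rfl
    have e5 : p (Sum.inl i) - p pI = -2 / (al i + 1) := by
      rw [e1, e4]; field_simp; ring
    have hne : p (Sum.inl i) ≠ p pI := by
      rw [← sub_ne_zero, e5]
      exact div_ne_zero (neg_ne_zero.2 h2) hi
    have := spec_cr p hne (show p p0 ≠ p p1 by rw [e2, e3]; exact zero_ne_one)
    rw [e5, e1, e2, e3, e4] at this
    convert this using 1
    field_simp
    ring
  have h2 : ∀ f : MvPolynomial (Fin k) ℚ,
      Spec (evp p) (embP k f) (algebraMap _ (RatFuncField k) f) := by
    intro f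
    induction f using MvPolynomial.induction_on with
    | C c =>
      have h3 := Spec.of (ev := evp p) (C c)
      have e1 : embP k (C c) = algebraMap _ (LL (PV k)) (C c : MvPolynomial (PV k) ℚ) := by
        simp only [embP, AlgHom.toRingHom_eq_coe, RingHom.coe_coe, aeval_C]
        rw [← MvPolynomial.algebraMap_eq, ← IsScalarTower.algebraMap_apply]
      have e2 : evp p (C c) = algebraMap _ (RatFuncField k) (C c : MvPolynomial (Fin k) ℚ) := by
        simp only [evp, AlgHom.toRingHom_eq_coe, RingHom.coe_coe, aeval_C]
        rw [← MvPolynomial.algebraMap_eq, ← IsScalarTower.algebraMap_apply]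
      rw [e1, ← e2]
      exact h3
    | add f g hf hg => rw [map_add, map_add]; exact hf.add hg
    | mul_X f i hf =>
      rw [map_mul, map_mul]
      refine hf.mul ?_
      have : embP k (X i) = cr (Sum.inl i : PV k) p0 pI p1 := by simp [embP]
      rw [this]
      exact h1 i
  rw [injective_iff_map_eq_zero]
  intro f hf
  have := h2 f
  rw [hf] at this
  have h3 := this.unique Spec.zero
  exact IsFractionRing.injective _ (RatFuncField k) (by rw [h3, map_zero])

/-- The embedding `ℚ(α₁, …, α_k) → ℚ(x_v)` sending `α_i` to the cross-ratio of `α_i, 0, ∞, 1`.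
It makes the hidden symmetry in the point `∞` visible. -/
noncomputable def emb (k : ℕ) : RatFuncField k →+* LL (PV k) :=
  IsFractionRing.lift (embP_injective k)

lemma emb_al {k : ℕ} (i : Fin k) : emb k (al i) = cr (Sum.inl i : PV k) p0 pI p1 := by
  rw [emb, al, IsFractionRing.lift_algebraMap]
  simp [embP]

lemma emb_injective (k : ℕ) : Function.Injective (emb k) := (emb k).injective

lemma emb_pt {k : ℕ} (u : PV k) (hu : u ≠ pI) :
    emb k (pt u) = dd u p0 * dd pI p1 / (dd u pI * dd p0 p1) := by
  have h1 : dd (pI : PV k) p1 ≠ 0 := dd_ne (by simp)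
  have h2 : dd (p0 : PV k) p1 ≠ 0 := dd_ne (by simp)
  have h3 : dd (p1 : PV k) pI ≠ 0 := dd_ne (by simp)
  rcases u with i | i
  · exact emb_al i
  · fin_cases i
    · simp [pt, dd]
    · have s1 : dd (p1 : PV k) p0 = - dd p0 p1 := by simp [dd]
      have s2 : dd (pI : PV k) p1 = - dd p1 pI := by simp [dd]
      simp only [pt, Sum.elim_inr]
      show emb k 1 = dd p1 p0 * dd pI p1 / (dd p1 pI * dd p0 p1)
      rw [s1, s2, map_one]
      field_simp
    · exact absurd rfl hu

/-- The image of the difference of two finite points. -/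
noncomputable def qq {k : ℕ} (u v : PV k) : LL (PV k) :=
  dd u v * dd p0 pI * dd p1 pI / (dd u pI * dd v pI * dd p1 p0)

lemma emb_sub {k : ℕ} (u v : PV k) (hu : u ≠ pI) (hv : v ≠ pI) :
    emb k (pt u - pt v) = qq u v := by
  rw [map_sub, emb_pt u hu, emb_pt v hv, qq]
  have h1 := dd_ne hu
  have h2 := dd_ne hv
  have h3 : dd (p0 : PV k) p1 ≠ 0 := dd_ne (by simp)
  have s1 : dd (p1 : PV k) p0 = - dd p0 p1 := by simp [dd]
  rw [s1]
  field_simp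
  unfold dd
  ring

/-! ### The set `A_k` and the group of cross-ratios -/

section Main

variable {k : ℕ}

lemma baseSet_iff (x : RatFuncField k) : x ∈ baseSet k ↔ ∃ u : PV k, u ≠ pI ∧ pt u = x := by
  simp only [baseSet, Set.mem_insert_iff, Set.mem_range]
  constructor
  · rintro (rfl | rfl | ⟨i, rfl⟩)
    · exact ⟨p0, by simp, rfl⟩
    · exact ⟨p1, by simp, rfl⟩
    · exact ⟨Sum.inl i, by simp, rfl⟩
  · rintro ⟨u | u, hu, rfl⟩
    · exact Or.inr (Or.inr ⟨u, rfl⟩)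
    · fin_cases u
      · exact Or.inl rfl
      · exact Or.inr (Or.inl rfl)
      · exact absurd rfl hu

lemma pt_ne {u v : PV k} (hu : u ≠ pI) (hv : v ≠ pI) (h : u ≠ v) : pt u ≠ pt v := by
  intro e
  have h1 := emb_sub u v hu hv
  rw [e, sub_self, map_zero, qq] at h1
  have h2 : dd (p0 : PV k) pI ≠ 0 := dd_ne (by simp)
  have h3 : dd (p1 : PV k) pI ≠ 0 := dd_ne (by simp)
  have h4 : dd (p1 : PV k) p0 ≠ 0 := dd_ne (by simp)
  exact div_ne_zero (mul_ne_zero (mul_ne_zero (dd_ne h) h2) h3)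
    (mul_ne_zero (mul_ne_zero (dd_ne hu) (dd_ne hv)) h4) h1.symm

lemma zero_mem_Ak : (0 : RatFuncField k) ∈ Ak k := Or.inl rfl

lemma pt_sub_mem {u v : PV k} (hu : u ≠ pI) (hv : v ≠ pI) (h : u ≠ v) : pt u - pt v ∈ Ak k :=
  Or.inr ⟨1, fun _ => pt u, fun _ => pt v, fun _ => 1, fun _ => ⟨(baseSet_iff _).2 ⟨u, hu, rfl⟩,
    (baseSet_iff _).2 ⟨v, hv, rfl⟩, pt_ne hu hv h⟩, by simp⟩

lemma one_mem_Ak : (1 : RatFuncField k) ∈ Ak k :=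
  Or.inr ⟨0, Fin.elim0, Fin.elim0, Fin.elim0, fun i => i.elim0, by simp⟩

lemma mul_mem_Ak {x y : RatFuncField k} (hx : x ∈ Ak k) (hy : y ∈ Ak k) : x * y ∈ Ak k := by
  rcases hx with rfl | ⟨s, β, γ, n, h, rfl⟩
  · rw [zero_mul]; exact zero_mem_Ak
  rcases hy with rfl | ⟨s', β', γ', n', h', rfl⟩
  · rw [mul_zero]; exact zero_mem_Ak
  refine Or.inr ⟨s + s', Fin.append β β', Fin.append γ γ', Fin.append n n', ?_, ?_⟩
  · intro i
    refine Fin.addCases (fun i => ?_) (fun i => ?_) i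
    · simpa using h i
    · simpa using h' i
  · simp [Fin.prod_univ_add]

lemma inv_mem_Ak {x : RatFuncField k} (hx : x ∈ Ak k) : x⁻¹ ∈ Ak k := by
  rcases hx with rfl | ⟨s, β, γ, n, h, rfl⟩
  · rw [inv_zero]; exact zero_mem_Ak
  · exact Or.inr ⟨s, β, γ, -n, h, by simp⟩

lemma div_mem_Ak {x y : RatFuncField k} (hx : x ∈ Ak k) (hy : y ∈ Ak k) : x / y ∈ Ak k := by
  rw [div_eq_mul_inv]; exact mul_mem_Ak hx (inv_mem_Ak hy)

/-- To prove a property of the nonzero elements of `A_k` it suffices to check the differences of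
finite points, products and inverses. -/
lemma Ak_induction {P : RatFuncField k → Prop} (h1 : P 1)
    (hd : ∀ u v : PV k, u ≠ pI → v ≠ pI → u ≠ v → P (pt u - pt v))
    (hm : ∀ x y, P x → P y → P (x * y)) (hi : ∀ x, P x → P x⁻¹) {x : RatFuncField k}
    (hx : x ∈ Ak k) (hx0 : x ≠ 0) : P x := by
  rcases hx with rfl | ⟨s, β, γ, n, h, rfl⟩
  · exact absurd rfl hx0
  have hpow : ∀ (y : RatFuncField k) (m : ℕ), P y → P (y ^ m) := by
    intro y m hy
    induction m with
    | zero => simpa using h1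
    | succ m ih => rw [pow_succ]; exact hm _ _ ih hy
  refine Finset.prod_induction _ P hm h1 fun i _ => ?_
  obtain ⟨hβ, hγ, hne⟩ := h i
  obtain ⟨u, hu, eu⟩ := (baseSet_iff _).1 hβ
  obtain ⟨v, hv, ev⟩ := (baseSet_iff _).1 hγ
  have hP : P (β i - γ i) := by
    rw [← eu, ← ev]
    refine hd u v hu hv ?_
    rintro rfl
    exact hne (eu.symm.trans ev)
  obtain ⟨m, e | e⟩ := (n i).eq_nat_or_neg
  · rw [e, zpow_natCast]; exact hpow _ _ hP
  · rw [e, zpow_neg, zpow_natCast]; exact hi _ (hpow _ _ hP)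

/-- `qq u v` is a product of cross-ratios. -/
lemma qq_mem (hk : 1 ≤ k) {u v : PV k} (hu : u ≠ pI) (hv : v ≠ pI) (h : u ≠ v) :
    qq u v ∈ Bm (PV k) := by
  have h01 : (p0 : PV k) ≠ p1 := by simp
  have h0I : (p0 : PV k) ≠ pI := by simp
  have h1I : (p1 : PV k) ≠ pI := by simp
  have hneg : (-1 : LL (PV k)) ∈ Bm (PV k) :=
    neg_one_mem (i := Sum.inl ⟨0, hk⟩) (j := p0) (a := p1) (b := pI)
      ⟨by simp, by simp, by simp, h01, h0I, h1I⟩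
  have e0I := dd_ne h0I
  have e1I := dd_ne h1I
  have e01 := dd_ne h01
  have s10 : dd (p1 : PV k) p0 = -dd p0 p1 := by simp [dd]
  have sI1 : dd (pI : PV k) p1 = -dd p1 pI := by simp [dd]
  have step1 : ∀ w : PV k, w ≠ pI → w ≠ p0 → qq w p0 ∈ Bm (PV k) := by
    intro w hw hw0
    have ew := dd_ne hw
    by_cases hw1 : w = p1
    · subst hw1
      have : qq (p1 : PV k) p0 = 1 := by
        rw [qq, s10]
        field_simp
      rw [this]; exact one_mem _
    · have : qq w p0 = cr w p0 pI p1 := by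
        rw [qq, cr, s10, sI1]
        field_simp
      rw [this]
      exact cr_mem ⟨hw0, hw, hw1, h0I, h01, h1I.symm⟩
  have eu := dd_ne hu
  have ev := dd_ne hv
  by_cases hv0 : v = p0
  · subst hv0; exact step1 u hu h
  by_cases hu0 : u = p0
  · subst hu0
    have : qq p0 v = (-1) * qq v p0 := by
      have : dd p0 v = - dd v p0 := by simp [dd]
      rw [qq, qq, this]
      field_simp
    rw [this]
    exact mul_mem hneg (step1 v hv hv0)
  have eu0 := dd_ne hu0
  have : qq u v = qq u p0 * cr u v p0 pI := by
    have h10 := dd_ne h01.symm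
    rw [qq, qq, cr]
    field_simp
  rw [this]
  exact mul_mem (step1 u hu hu0) (cr_mem ⟨h, hu0, hu, hv0, hv, h0I⟩)

lemma emb_mem (hk : 1 ≤ k) {x : RatFuncField k} (hx : x ∈ Ak k) (hx0 : x ≠ 0) :
    emb k x ∈ Bm (PV k) := by
  refine Ak_induction (P := fun x => emb k x ∈ Bm (PV k)) ?_ ?_ ?_ ?_ hx hx0
  · rw [map_one]; exact one_mem _
  · intro u v hu hv h
    rw [emb_sub u v hu hv]
    exact qq_mem hk hu hv h
  · intro x y hx hy; rw [map_mul]; exact mul_mem hx hy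
  · intro x hx; rw [map_inv₀]; exact Bm_inv hx

lemma exists_of_mem {y : LL (PV k)} (hy : y ∈ Bm (PV k)) : ∃ x ∈ Ak k, emb k x = y := by
  have h0I := dd_ne (show (p0 : PV k) ≠ pI by simp)
  have h1I := dd_ne (show (p1 : PV k) ≠ pI by simp)
  have h10 := dd_ne (show (p1 : PV k) ≠ p0 by simp)
  -- a cross-ratio with first entry `∞`
  have inf : ∀ i j a b : PV k, Dist4 i j a b → i = pI → ∃ x ∈ Ak k, emb k x = cr i j a b := by
    rintro i j a b ⟨h1, h2, h3, h4, h5, h6⟩ rfl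
    refine ⟨(pt a - pt b) / (pt j - pt b), div_mem_Ak (pt_sub_mem h2.symm h3.symm h6)
      (pt_sub_mem h1.symm h3.symm h5), ?_⟩
    rw [map_div₀, emb_sub _ _ h2.symm h3.symm, emb_sub _ _ h1.symm h3.symm, qq, qq, cr]
    have e1 := dd_ne h1.symm
    have e2 := dd_ne h2.symm
    have e3 := dd_ne h3.symm
    have e5 := dd_ne h5
    have s : ∀ u v : PV k, dd u v = -dd v u := fun u v => by simp [dd]
    rw [s pI j, s pI a]
    field_simp
  induction hy using Submonoid.closure_induction with
  | mem x hx =>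
    obtain ⟨i, j, a, b, h, rfl⟩ := hx
    obtain ⟨h1, h2, h3, h4, h5, h6⟩ := id h
    by_cases hi : i = pI
    · exact inf i j a b h hi
    by_cases hj : j = pI
    · rw [cr_klein1]
      exact inf j i b a ⟨h1.symm, h5, h4, h3, h2, h6.symm⟩ hj
    by_cases ha : a = pI
    · rw [cr_klein2]
      exact inf a b i j ⟨h6, h2.symm, h4.symm, h3.symm, h5.symm, h1⟩ ha
    by_cases hb : b = pI
    · rw [cr_klein1, cr_klein2]
      exact inf b a j i ⟨h6.symm, h5.symm, h3.symm, h4.symm, h2.symm, h1.symm⟩ hb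
    refine ⟨(pt i - pt j) * (pt a - pt b) / ((pt i - pt a) * (pt j - pt b)),
      div_mem_Ak (mul_mem_Ak (pt_sub_mem hi hj h1) (pt_sub_mem ha hb h6))
        (mul_mem_Ak (pt_sub_mem hi ha h2) (pt_sub_mem hj hb h5)), ?_⟩
    simp only [map_div₀, map_mul, emb_sub _ _ hi hj, emb_sub _ _ ha hb, emb_sub _ _ hi ha,
      emb_sub _ _ hj hb, qq, cr]
    have e1 := dd_ne hi
    have e2 := dd_ne hj
    have e3 := dd_ne ha
    have e4 := dd_ne hb
    have e5 := dd_ne h2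
    have e6 := dd_ne h5
    field_simp
  | one => exact ⟨1, one_mem_Ak, map_one _⟩
  | mul x y _ _ hx hy =>
    obtain ⟨x, hx, rfl⟩ := hx
    obtain ⟨y, hy, rfl⟩ := hy
    exact ⟨x * y, mul_mem_Ak hx hy, map_mul _ _ _⟩

/-! ### Automorphisms induced by permutations of the points -/

/-- `σ` is the restriction to `A_k` of the field automorphism permuting the points by `π`. -/
def Induced (π : Equiv.Perm (PV k)) (σ : Equiv.Perm (Ak k)) : Prop :=
  ∀ x : Ak k, emb k (σ x) = act π (emb k x)

lemma act_emb_exists (hk : 1 ≤ k) (π : Equiv.Perm (PV k)) (x : Ak k) :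
    ∃ y : Ak k, emb k y = act π (emb k x) := by
  by_cases hx : (x : RatFuncField k) = 0
  · exact ⟨⟨0, zero_mem_Ak⟩, by simp [hx]⟩
  · obtain ⟨y, hy, e⟩ := exists_of_mem (act_mem π (emb_mem hk x.2 hx))
    exact ⟨⟨y, hy⟩, e⟩

lemma act_mul_emb (hk : 1 ≤ k) (π ρ : Equiv.Perm (PV k)) (x : Ak k) :
    act (π * ρ) (emb k x) = act π (act ρ (emb k x)) := by
  by_cases hx : (x : RatFuncField k) = 0
  · simp [hx]
  · exact act_mul_of_mem π ρ (emb_mem hk x.2 hx)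

lemma act_one_emb (hk : 1 ≤ k) (x : Ak k) : act 1 (emb k (x : RatFuncField k)) = emb k x := by
  by_cases hx : (x : RatFuncField k) = 0
  · simp [hx]
  · exact act_one_of_mem (emb_mem hk x.2 hx)

lemma exists_induced (hk : 1 ≤ k) (π : Equiv.Perm (PV k)) : ∃ σ, Induced π σ := by
  choose f hf using act_emb_exists hk π
  choose g hg using act_emb_exists hk π⁻¹
  refine ⟨⟨f, g, fun x => ?_, fun x => ?_⟩, hf⟩
  · apply Subtype.ext
    apply emb_injective k
    rw [hg, hf, ← act_mul_emb hk, inv_mul_cancel, act_one_emb hk]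
  · apply Subtype.ext
    apply emb_injective k
    rw [hf, hg, ← act_mul_emb hk, mul_inv_cancel, act_one_emb hk]

lemma Induced.isUkAut {π : Equiv.Perm (PV k)} {σ : Equiv.Perm (Ak k)} (h : Induced π σ) :
    IsUkAut k σ := by
  refine ⟨fun x hx => ?_, fun x y z e => ?_, fun a b c => ?_⟩
  · apply emb_injective k
    rw [h, hx, map_zero, map_zero]
  · apply emb_injective k
    rw [map_mul, h, h, h, ← map_mul, ← map_mul, e]
  · have e : emb k ((σ a : RatFuncField k) + σ b + σ c) = act π (emb k ((a : RatFuncField k) + b + c)) := by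
      simp only [map_add, h a, h b, h c]
    rw [← map_eq_zero_iff (emb k) (emb_injective k) (x := (σ a : RatFuncField k) + σ b + σ c), e,
      map_eq_zero_iff _ (act π).injective, map_eq_zero_iff _ (emb_injective k)]

lemma Induced.unique {π : Equiv.Perm (PV k)} {σ τ : Equiv.Perm (Ak k)} (h : Induced π σ)
    (h' : Induced π τ) : σ = τ := by
  ext1 x
  apply Subtype.ext
  apply emb_injective k
  rw [h, h']

lemma Induced.mul (hk : 1 ≤ k) {π ρ : Equiv.Perm (PV k)} {σ τ : Equiv.Perm (Ak k)}
    (h : Induced π σ) (h' : Induced ρ τ) : Induced (π * ρ) (σ * τ) := by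
  intro x
  rw [Equiv.Perm.mul_apply, h, h', act_mul_emb hk]

lemma Induced.act_eq {π : Equiv.Perm (PV k)} (h : Induced π 1) {y : LL (PV k)}
    (hy : y ∈ Bm (PV k)) : act π y = y := by
  obtain ⟨x, hx, rfl⟩ := exists_of_mem hy
  exact (h ⟨x, hx⟩).symm

/-! ### Every automorphism is induced -/

lemma pt_p0 : pt (p0 : PV k) = 0 := rfl

lemma pt_p1 : pt (p1 : PV k) = 1 := rfl

lemma neg_one_mem_Ak : (-1 : RatFuncField k) ∈ Ak k := by
  have := pt_sub_mem (k := k) (u := p0) (v := p1) (by simp) (by simp) (by simp)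
  rwa [pt_p0, pt_p1, zero_sub] at this

lemma neg_mem_Ak {x : RatFuncField k} (hx : x ∈ Ak k) : -x ∈ Ak k := by
  rw [← neg_one_mul]; exact mul_mem_Ak neg_one_mem_Ak hx

lemma al_mem (i : Fin k) : al i ∈ Ak k := by
  have := pt_sub_mem (k := k) (u := Sum.inl i) (v := p0) (by simp) (by simp) (by simp)
  rwa [pt_p0, sub_zero] at this

lemma al_ne_zero (i : Fin k) : al i ≠ 0 :=
  pt_ne (u := Sum.inl i) (v := p0) (by simp) (by simp) (by simp)

lemma al_ne_one (i : Fin k) : al i ≠ 1 :=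
  pt_ne (u := Sum.inl i) (v := p1) (by simp) (by simp) (by simp)

lemma al_injective {i j : Fin k} (h : i ≠ j) : al i ≠ al j :=
  pt_ne (u := Sum.inl i) (v := Sum.inl j) (by simp) (by simp) (by simpa using h)

lemma one_sub_al_mem (i : Fin k) : 1 - al i ∈ Ak k :=
  pt_sub_mem (k := k) (u := p1) (v := Sum.inl i) (by simp) (by simp) (by simp)

lemma al_sub_mem {i j : Fin k} (h : i ≠ j) : al i - al j ∈ Ak k :=
  pt_sub_mem (k := k) (u := Sum.inl i) (v := Sum.inl j) (by simp) (by simp) (by simpa using h)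

variable {σ : Equiv.Perm (Ak k)}

lemma aut_ne (h : IsUkAut k σ) {x : Ak k} (hx : (x : RatFuncField k) ≠ 0) :
    (σ x : RatFuncField k) ≠ 0 := by
  intro h0
  apply hx
  have h1 := h.1 ⟨0, zero_mem_Ak⟩ rfl
  have h2 : σ x = σ ⟨0, zero_mem_Ak⟩ := Subtype.ext (h0.trans h1.symm)
  rw [σ.injective h2]

lemma aut_one (h : IsUkAut k σ) : (σ ⟨1, one_mem_Ak⟩ : RatFuncField k) = 1 := by
  have h1 := h.2.1 ⟨1, one_mem_Ak⟩ ⟨1, one_mem_Ak⟩ ⟨1, one_mem_Ak⟩ (by simp)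
  have h2 := aut_ne h (x := ⟨1, one_mem_Ak⟩) one_ne_zero
  exact mul_left_cancel₀ h2 (by rw [h1, mul_one])

lemma aut_neg (h : IsUkAut k σ) {x y : Ak k} (e : (x : RatFuncField k) = -y) :
    (σ x : RatFuncField k) = -σ y := by
  have h0 := h.1 ⟨0, zero_mem_Ak⟩ rfl
  have h1 := (h.2.2 x y ⟨0, zero_mem_Ak⟩).1 (by simp [e])
  rw [h0] at h1
  linear_combination h1

lemma aut_one_sub (h : IsUkAut k σ) {x y : Ak k} (e : (x : RatFuncField k) = 1 - y) :
    (σ x : RatFuncField k) = 1 - σ y := by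
  have h0 := aut_neg h (x := ⟨-1, neg_one_mem_Ak⟩) (y := ⟨1, one_mem_Ak⟩) rfl
  have h1 := (h.2.2 x y ⟨-1, neg_one_mem_Ak⟩).1 (by simp [e])
  rw [h0, aut_one h] at h1
  linear_combination h1

lemma aut_inv (h : IsUkAut k σ) {x y : Ak k} (e : (x : RatFuncField k) = (y : RatFuncField k)⁻¹) :
    (σ x : RatFuncField k) = (σ y : RatFuncField k)⁻¹ := by
  by_cases hy : (y : RatFuncField k) = 0
  · rw [hy, inv_zero] at e
    rw [h.1 x e, h.1 y hy, inv_zero]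
  · apply eq_inv_of_mul_eq_one_left
    rw [h.2.1 x y ⟨1, one_mem_Ak⟩ (by rw [e, inv_mul_cancel₀ hy]), aut_one h]

/-- Automorphisms send fundamental elements to fundamental elements, that is to
cross-ratios. -/
lemma aut_cr (hk : 1 ≤ k) (h : IsUkAut k σ) (x : Ak k) (hx : (x : RatFuncField k) ≠ 0)
    (hx1 : (x : RatFuncField k) ≠ 1) (hm : 1 - (x : RatFuncField k) ∈ Ak k) :
    ∃ i j a b : PV k, Dist4 i j a b ∧ emb k (σ x) = cr i j a b := by
  apply eq_cr_of_one_sub_mem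
  · exact emb_mem hk (σ x).2 (aut_ne h hx)
  · have e := aut_one_sub h (x := ⟨1 - x, hm⟩) (y := x) rfl
    rw [← map_one (emb k), ← map_sub, ← e]
    exact emb_mem hk (σ _).2 (aut_ne h (sub_ne_zero.2 (Ne.symm hx1)))

/-- An automorphism is determined by its values on the `α_i`. -/
lemma induced_of_al (h : IsUkAut k σ) (π : Equiv.Perm (PV k))
    (hπ : ∀ i, emb k (σ ⟨al i, al_mem i⟩) = act π (emb k (al i))) : Induced π σ := by
  let P : RatFuncField k → Prop := fun x => ∃ hx : x ∈ Ak k, emb k (σ ⟨x, hx⟩) = act π (emb k x)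
  have P1 : P 1 := ⟨one_mem_Ak, by rw [aut_one h, map_one, map_one]⟩
  have Pmul : ∀ x y, P x → P y → P (x * y) := by
    rintro x y ⟨hx, ex⟩ ⟨hy, ey⟩
    refine ⟨mul_mem_Ak hx hy, ?_⟩
    rw [← h.2.1 ⟨x, hx⟩ ⟨y, hy⟩ ⟨x * y, mul_mem_Ak hx hy⟩ rfl, map_mul, ex, ey, map_mul, map_mul]
  have Pinv : ∀ x, P x → P x⁻¹ := by
    rintro x ⟨hx, ex⟩
    refine ⟨inv_mem_Ak hx, ?_⟩
    rw [aut_inv h (y := ⟨x, hx⟩) rfl, map_inv₀, ex, map_inv₀, map_inv₀]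
  have Pneg : ∀ x, P x → P (-x) := by
    rintro x ⟨hx, ex⟩
    refine ⟨neg_mem_Ak hx, ?_⟩
    rw [aut_neg h (y := ⟨x, hx⟩) rfl, map_neg, ex, map_neg, map_neg]
  have Psub : ∀ x, P x → 1 - x ∈ Ak k → P (1 - x) := by
    rintro x ⟨hx, ex⟩ hm
    refine ⟨hm, ?_⟩
    rw [aut_one_sub h (y := ⟨x, hx⟩) rfl, map_sub, ex, map_sub, map_sub]
    simp only [map_one]
  have Pal : ∀ i, P (al i) := fun i => ⟨al_mem i, hπ i⟩
  have Pd : ∀ u v : PV k, u ≠ pI → v ≠ pI → u ≠ v → P (pt u - pt v) := by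
    have base : ∀ v : PV k, v ≠ pI → v ≠ p0 → P (pt v) := by
      rintro (v | v) hv hv0
      · exact Pal v
      · fin_cases v
        · exact absurd rfl hv0
        · exact P1
        · exact absurd rfl hv
    intro u v hu hv huv
    by_cases hu0 : u = p0
    · rw [hu0, pt_p0, zero_sub]
      exact Pneg _ (base v hv (hu0 ▸ huv.symm))
    · have hpu : pt u ≠ 0 := pt_ne hu (by simp) hu0
      by_cases hv0 : v = p0
      · rw [hv0, pt_p0, sub_zero]
        exact base u hu hu0
      · have e1 : 1 - pt v * (pt u)⁻¹ = (pt u - pt v) / pt u := by field_simp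
        have e2 : pt u - pt v = pt u * (1 - pt v * (pt u)⁻¹) := by field_simp
        rw [e2]
        refine Pmul _ _ (base u hu hu0) (Psub _ (Pmul _ _ (base v hv hv0)
          (Pinv _ (base u hu hu0))) ?_)
        rw [e1]
        exact div_mem_Ak (pt_sub_mem hu hv huv) (base u hu hu0).1
  intro x
  by_cases hx : (x : RatFuncField k) = 0
  · rw [h.1 x hx, hx, map_zero, map_zero]
  · exact (Ak_induction (P := P) P1 Pd Pmul Pinv x.2 hx).2

lemma injective_vec3 {α : Type*} {x y z : α} (h1 : x ≠ y) (h2 : x ≠ z) (h3 : y ≠ z) :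
    Function.Injective ![x, y, z] := by
  intro s t hst
  fin_cases s <;> fin_cases t <;> first
    | rfl
    | exact absurd hst h1
    | exact absurd hst h2
    | exact absurd hst h3
    | exact absurd hst.symm h1
    | exact absurd hst.symm h2
    | exact absurd hst.symm h3

/-- Every automorphism is induced by a permutation of the points. -/
theorem exists_perm (hk : 1 ≤ k) (h : IsUkAut k σ) : ∃ π : Equiv.Perm (PV k), Induced π σ := by
  have ratio : ∀ {x y : RatFuncField k} (hx : x ∈ Ak k) (hy : y ∈ Ak k), x ≠ 0 → y ≠ 0 → x ≠ y →
      y - x ∈ Ak k → ∃ i j a b : PV k, Dist4 i j a b ∧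
        emb k (σ ⟨x, hx⟩) = emb k (σ ⟨y, hy⟩) * cr i j a b := by
    intro x y hx hy hx0 hy0 hxy hm
    have e1 : 1 - x / y = (y - x) / y := by field_simp
    obtain ⟨i, j, a, b, d, e⟩ := aut_cr hk h ⟨x / y, div_mem_Ak hx hy⟩ (div_ne_zero hx0 hy0)
      (fun e => hxy ((div_eq_one_iff_eq hy0).1 e)) (by
        show 1 - x / y ∈ Ak k
        rw [e1]; exact div_mem_Ak hm hy)
    refine ⟨i, j, a, b, d, ?_⟩
    rw [← e, ← map_mul]
    rw [h.2.1 ⟨y, hy⟩ ⟨x / y, div_mem_Ak hx hy⟩ ⟨x, hx⟩ (mul_div_cancel₀ x hy0)]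
  have sub : ∀ i, emb k (σ ⟨1 - al i, one_sub_al_mem i⟩) = 1 - emb k (σ ⟨al i, al_mem i⟩) := by
    intro i
    rw [aut_one_sub h (y := ⟨al i, al_mem i⟩) rfl, map_sub, map_one]
  obtain ⟨j, a, b, z, hz, hd, hf⟩ := glue hk (fun i => emb k (σ ⟨al i, al_mem i⟩))
    (fun i => aut_cr hk h _ (al_ne_zero i) (al_ne_one i) (one_sub_al_mem i))
    (fun i j hij => ratio _ _ (al_ne_zero i) (al_ne_zero j) (al_injective hij)
      (al_sub_mem hij.symm))
    (fun i j hij => by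
      rw [← sub, ← sub]
      refine ratio _ _ (sub_ne_zero.2 (al_ne_one i).symm) (sub_ne_zero.2 (al_ne_one j).symm)
        (fun e => al_injective hij (by linear_combination -e)) ?_
      have : 1 - al j - (1 - al i) = al i - al j := by ring
      rw [this]
      exact al_sub_mem hij)
  -- the images of `α_i`, `0`, `1`, `∞` under the permutation
  let f : PV k → PV k := Sum.elim z ![j, b, a]
  obtain ⟨-, -, -, h4, h5, h6⟩ := hd ⟨0, hk⟩
  have hfi : Function.Injective f := by
    refine Function.Injective.sumElim hz ?_ ?_
    · exact injective_vec3 h5 h4 h6.symm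
    · intro s t
      obtain ⟨h1, h2, h3, -, -, -⟩ := hd s
      fin_cases t
      · exact h1
      · exact h3
      · exact h2
  refine ⟨Equiv.ofBijective f (Finite.injective_iff_bijective.1 hfi), ?_⟩
  apply induced_of_al h
  intro i
  rw [emb_al, act_cr]
  exact hf i

/-! ### Identification of the automorphism group -/

/-- If `G` maps to the permutations of the points so that every permutation acts like the image of
an element of `G`, and only the unit of `G` acts trivially, then `Aut(U_k)` is isomorphic to `G`. -/
theorem aut_iso (hk : 1 ≤ k) {G : Type} [Group G] (φ : G →* Equiv.Perm (PV k))
    (surj : ∀ π : Equiv.Perm (PV k), ∃ g, ∀ i : Fin k,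
      act π (cr (Sum.inl i) p0 pI p1) = act (φ g) (cr (Sum.inl i) p0 pI p1))
    (inj : ∀ g, (∀ y ∈ Bm (PV k), act (φ g) y = y) → g = 1) :
    ∃ e : {σ : Equiv.Perm (Ak k) // IsUkAut k σ} ≃ G,
      ∀ σ τ ρ : {σ : Equiv.Perm (Ak k) // IsUkAut k σ},
        (ρ : Equiv.Perm (Ak k)) = (σ : Equiv.Perm (Ak k)) * (τ : Equiv.Perm (Ak k)) →
          e ρ = e σ * e τ := by
  choose s hs using fun g => exists_induced hk (φ g)
  have smul : ∀ g g', s (g * g') = s g * s g' := by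
    intro g g'
    refine Induced.unique (hs (g * g')) ?_
    rw [map_mul]
    exact (hs g).mul hk (hs g')
  let F : G → {σ : Equiv.Perm (Ak k) // IsUkAut k σ} := fun g => ⟨s g, (hs g).isUkAut⟩
  have hF : Function.Bijective F := by
    constructor
    · intro g g' hgg
      have e : s g = s g' := congrArg Subtype.val hgg
      have e1 : s (g * g'⁻¹) = 1 := by
        have e2 : s 1 = 1 := by
          have := smul 1 1
          rw [mul_one] at this
          exact left_eq_mul.1 this
        rw [smul, e, ← smul, mul_inv_cancel, e2]
      have := inj (g * g'⁻¹) fun y hy => Induced.act_eq (e1 ▸ hs (g * g'⁻¹)) hy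
      exact mul_inv_eq_one.1 this
    · rintro ⟨σ, hσ⟩
      obtain ⟨π, hπ⟩ := exists_perm hk hσ
      obtain ⟨g, hg⟩ := surj π
      refine ⟨g, Subtype.ext ?_⟩
      refine Induced.unique (hs g) (induced_of_al hσ _ fun i => ?_)
      rw [hπ, emb_al, hg]
  refine ⟨(Equiv.ofBijective F hF).symm, fun σ τ ρ hρ => ?_⟩
  rw [Equiv.symm_apply_eq]
  apply Subtype.ext
  have h1 : ∀ σ, s ((Equiv.ofBijective F hF).symm σ) = σ.1 := fun σ =>
    congrArg Subtype.val ((Equiv.ofBijective F hF).apply_symm_apply σ)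
  show ρ.1 = s _
  rw [smul, h1, h1, hρ]

/-- For `k ≥ 2` all permutations of the `k + 3` points act, and they act faithfully. -/
theorem aut_iso_of_two_le (hk : 2 ≤ k) :
    ∃ e : {σ : Equiv.Perm (Ak k) // IsUkAut k σ} ≃ Equiv.Perm (Fin (k + 3)),
      ∀ σ τ ρ : {σ : Equiv.Perm (Ak k) // IsUkAut k σ},
        (ρ : Equiv.Perm (Ak k)) = (σ : Equiv.Perm (Ak k)) * (τ : Equiv.Perm (Ak k)) →
          e ρ = e σ * e τ := by
  let φ : Equiv.Perm (Fin (k + 3)) ≃* Equiv.Perm (PV k) := finSumFinEquiv.symm.permCongrHom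
  refine aut_iso (by omega) φ.toMonoidHom (fun π => ⟨φ.symm π, fun i => ?_⟩) fun g hg => ?_
  · simp
  · have := eq_one_of_five (by simp; omega) _ hg
    exact (map_eq_one_iff φ φ.injective).1 this

/-- The quadruple defining `α₁`, which exhausts the points for `k = 1`. -/
def b0 : Fin 4 → PV 1 := ![Sum.inl 0, p0, pI, p1]

/-- For `k = 1` the Klein group acts simply transitively on the points and trivially on
cross-ratios, so the stabilizer of `∞` already gives all automorphisms. -/
theorem aut_iso_one :
    ∃ e : {σ : Equiv.Perm (Ak 1) // IsUkAut 1 σ} ≃ Equiv.Perm (Fin 3),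
      ∀ σ τ ρ : {σ : Equiv.Perm (Ak 1) // IsUkAut 1 σ},
        (ρ : Equiv.Perm (Ak 1)) = (σ : Equiv.Perm (Ak 1)) * (τ : Equiv.Perm (Ak 1)) →
          e ρ = e σ * e τ := by
  have hcard : Fintype.card {v : PV 1 // v ≠ pI} = 3 := by decide
  let ε : Fin 3 ≃ {v : PV 1 // v ≠ pI} := (Fintype.equivFinOfCardEq hcard).symm
  let ψ : Equiv.Perm (Fin 3) ≃* Equiv.Perm {v : PV 1 // v ≠ pI} := ε.permCongrHom
  let φ : Equiv.Perm (Fin 3) →* Equiv.Perm (PV 1) :=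
    (Equiv.Perm.ofSubtype (p := fun v : PV 1 => v ≠ pI)).comp ψ.toMonoidHom
  refine aut_iso le_rfl φ (fun π => ?_) fun g hg => ?_
  · obtain ⟨κ, t, h1, h2⟩ := (by decide : ∀ c : PV 1, ∃ κ : Equiv.Perm (PV 1), ∃ t : Fin 4,
      κ pI = c ∧ ∀ s, κ (b0 s) = b0 (kl t s)) (π.symm pI)
    have hfix : (π * κ) pI = pI := by rw [Equiv.Perm.mul_apply, h1, Equiv.apply_symm_apply]
    have hfix' : ∀ v, v ≠ pI ↔ (π * κ) v ≠ pI := by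
      intro v
      rw [not_iff_not]
      constructor
      · rintro rfl; exact hfix
      · intro hv; exact (π * κ).injective (hv.trans hfix.symm)
    refine ⟨ψ.symm ((π * κ).subtypePerm (fun v => (hfix' v).symm)), fun i => ?_⟩
    have e : φ (ψ.symm ((π * κ).subtypePerm (fun v => (hfix' v).symm))) = π * κ := by
      show Equiv.Perm.ofSubtype (ψ (ψ.symm _)) = _
      rw [MulEquiv.apply_symm_apply]
      refine Equiv.Perm.ofSubtype_subtypePerm _ fun v hv => ?_
      rintro rfl
      exact hv hfix
    rw [e, act_cr, act_cr, Subsingleton.elim i 0]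
    have := crq_kl (fun s => π (b0 s)) t
    simp only [← h2] at this
    exact this.symm
  · have hI : φ g pI = pI := Equiv.Perm.ofSubtype_apply_of_not_mem _ (by simp)
    have key : φ g = 1 := by
      ext1 v
      by_cases hv : v = pI
      · rw [hv]; exact hI
      · obtain ⟨x, y, d, hxy⟩ : ∃ x y : PV 1, (x ≠ y ∧ x ≠ pI ∧ x ≠ v ∧ y ≠ pI ∧ y ≠ v ∧ pI ≠ v) ∧
            ∀ u, u = x ∨ u = y ∨ u = pI ∨ u = v := by
          rcases v with v | v
          · rw [Subsingleton.elim v 0]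
            exact ⟨p0, p1, by decide, by decide⟩
          · fin_cases v
            · exact ⟨Sum.inl 0, p1, by decide, by decide⟩
            · exact ⟨Sum.inl 0, p0, by decide, by decide⟩
            · exact absurd rfl hv
        exact fix_of_fix hg d hxy hI
    have h1 : ψ g = 1 := Equiv.Perm.ofSubtype_injective (by rw [map_one]; exact key)
    exact (map_eq_one_iff ψ ψ.injective).1 h1

end Main

end KReg

/-- `Aut(U₁)` is isomorphic to the symmetric group `S₃`, and for `k ≥ 2`, `Aut(U_k)` is
isomorphic to the symmetric group `S_{k+3}`: there is a bijection from the automorphisms of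
`U_k` to the permutations which carries composition to composition. -/
theorem aut_kRegular_partialField :
    (∃ e : {σ : Equiv.Perm (Ak 1) // IsUkAut 1 σ} ≃ Equiv.Perm (Fin 3),
      ∀ σ τ ρ : {σ : Equiv.Perm (Ak 1) // IsUkAut 1 σ},
        (ρ : Equiv.Perm (Ak 1)) = (σ : Equiv.Perm (Ak 1)) * (τ : Equiv.Perm (Ak 1)) →
          e ρ = e σ * e τ) ∧
    (∀ k : ℕ, 2 ≤ k →
      ∃ e : {σ : Equiv.Perm (Ak k) // IsUkAut k σ} ≃ Equiv.Perm (Fin (k + 3)),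
        ∀ σ τ ρ : {σ : Equiv.Perm (Ak k) // IsUkAut k σ},
          (ρ : Equiv.Perm (Ak k)) = (σ : Equiv.Perm (Ak k)) * (τ : Equiv.Perm (Ak k)) →
            e ρ = e σ * e τ) := by
  exact ⟨KReg.aut_iso_one, fun _ hk => KReg.aut_iso_of_two_le hk⟩
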